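/- arXiv:2504.05655 — 2 statements merged into one kernel-verified Lean document; each statement's English description precedes it below -/
import Mathlib

section
/- Every bounded C² map v : ℝ² → ℝ³ satisfying L_W[v] = Δv − 2 W_x ∧ v_y − 2 v_x ∧ W_y = 0 at every point of ℝ² is a real linear combination of the thirteen maps Z_{0,1}, Z_{0,2}, Z_{1,1}, Z_{1,2}, Z_{2,1}, Z_{2,2}, Z_{−1,1}, Z_{−1,2}, Z_{−2,1}, Z_{−2,2}, K₁, K₂, K₃; moreover these thirteen maps are linearly independent over ℝ, so the space of bounded kernels of L_W is 13-dimensional. -/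
noncomputable section

/-- `ℝ³` with the Euclidean norm. -/
abbrev R3 : Type := EuclideanSpace ℝ (Fin 3)

/-- The vector in `ℝ³` with the given coordinates. -/
def e3 (a b c : ℝ) : R3 := (WithLp.equiv 2 (Fin 3 → ℝ)).symm ![a, b, c]

/-- The cross product on `ℝ³`. -/
def cross (a b : R3) : R3 :=
  e3 (a 1 * b 2 - a 2 * b 1) (a 2 * b 0 - a 0 * b 2) (a 0 * b 1 - a 1 * b 0)

/-- Partial derivative in the `x` direction, identifying `ℝ²` with `ℂ` via `z = x + iy`. -/
def pdx (u : ℂ → R3) (z : ℂ) : R3 := fderiv ℝ u z 1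

/-- Partial derivative in the `y` direction. -/
def pdy (u : ℂ → R3) (z : ℂ) : R3 := fderiv ℝ u z Complex.I

/-- Componentwise Laplacian. -/
def lap (u : ℂ → R3) (z : ℂ) : R3 := pdx (pdx u) z + pdy (pdy u) z

/-- The degree-2 H-bubble `W = π(z²)`. -/
def W : ℂ → R3 := fun z =>
  e3 (2 * (z.re ^ 2 - z.im ^ 2) / ((z.re ^ 2 + z.im ^ 2) ^ 2 + 1))
    (4 * z.re * z.im / ((z.re ^ 2 + z.im ^ 2) ^ 2 + 1))
    (((z.re ^ 2 + z.im ^ 2) ^ 2 - 1) / ((z.re ^ 2 + z.im ^ 2) ^ 2 + 1))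

/-- The linearized H-system operator at the degree-2 bubble `W`:
`L_W[v] = Δv − 2 Wₓ ∧ v_y − 2 vₓ ∧ W_y`. -/
def LW (v : ℂ → R3) (z : ℂ) : R3 :=
  lap v z - (2 : ℝ) • cross (pdx W z) (pdy v z) - (2 : ℝ) • cross (pdx v z) (pdy W z)

/-- `v` is a bounded smooth global solution of the linearized H-system at `W`. -/
def IsBoundedSmoothKernel (v : ℂ → R3) : Prop :=
  (∃ C : ℝ, ∀ z, ‖v z‖ ≤ C) ∧ ContDiff ℝ (⊤ : ℕ∞) v ∧ ∀ z, LW v z = 0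

def Z01 : ℂ → R3 := fun z =>
  let x := z.re; let y := z.im; let D := (x ^ 2 + y ^ 2) ^ 2 + 1
  e3 (4 * (x - y) * (x + y) * (x ^ 2 + y ^ 2 - 1) * (x ^ 2 + y ^ 2 + 1) / D ^ 2)
    (8 * x * y * ((x ^ 2 + y ^ 2) ^ 2 - 1) / D ^ 2)
    (-(8 * (x ^ 2 + y ^ 2) ^ 2) / D ^ 2)

def Z02 : ℂ → R3 := fun z =>
  let x := z.re; let y := z.im; let D := (x ^ 2 + y ^ 2) ^ 2 + 1
  e3 (-(4 * x * y) / D) (2 * (x - y) * (x + y) / D) 0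

def Z11 : ℂ → R3 := fun z =>
  let x := z.re; let y := z.im; let D := (x ^ 2 + y ^ 2) ^ 2 + 1
  e3 (4 * x * (x ^ 4 - 2 * x ^ 2 * y ^ 2 - 3 * y ^ 4 - 1) / D ^ 2)
    (-(4 * y * (-(3 * x ^ 4) - 2 * x ^ 2 * y ^ 2 + y ^ 4 + 1)) / D ^ 2)
    (-(8 * x * (x ^ 2 + y ^ 2)) / D ^ 2)

def Z12 : ℂ → R3 := fun z =>
  let x := z.re; let y := z.im; let D := (x ^ 2 + y ^ 2) ^ 2 + 1
  e3 (4 * y * (3 * x ^ 4 + 2 * x ^ 2 * y ^ 2 - y ^ 4 + 1) / D ^ 2)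
    (-(4 * x * (x ^ 4 - 2 * x ^ 2 * y ^ 2 - 3 * y ^ 4 + 1)) / D ^ 2)
    (-(8 * y * (x ^ 2 + y ^ 2)) / D ^ 2)

def Z21 : ℂ → R3 := fun z =>
  let x := z.re; let y := z.im; let D := (x ^ 2 + y ^ 2) ^ 2 + 1
  e3 (-(2 * (x ^ 4 - 6 * x ^ 2 * y ^ 2 + y ^ 4 - 1)) / D ^ 2)
    (-(8 * x * y * (x - y) * (x + y)) / D ^ 2)
    (4 * (x - y) * (x + y) / D ^ 2)

def Z22 : ℂ → R3 := fun z =>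
  let x := z.re; let y := z.im; let D := (x ^ 2 + y ^ 2) ^ 2 + 1
  e3 (-(8 * x * y * (x - y) * (x + y)) / D ^ 2)
    (2 * (x ^ 4 - 6 * x ^ 2 * y ^ 2 + y ^ 4 + 1) / D ^ 2)
    (8 * x * y / D ^ 2)

def Zm11 : ℂ → R3 := fun z =>
  let x := z.re; let y := z.im; let D := (x ^ 2 + y ^ 2) ^ 2 + 1
  e3 (-(4 * x * (3 * (x ^ 4 + 1) * y ^ 2 + 3 * x ^ 2 * y ^ 4 + x ^ 2 * (x ^ 4 - 1) + y ^ 6)) / D ^ 2)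
    (-(4 * y * (x ^ 6 + 3 * x ^ 4 * y ^ 2 + 3 * x ^ 2 * (y ^ 4 - 1) + y ^ 6 + y ^ 2)) / D ^ 2)
    (8 * x * (x ^ 2 + y ^ 2) ^ 2 / D ^ 2)

def Zm12 : ℂ → R3 := fun z =>
  let x := z.re; let y := z.im; let D := (x ^ 2 + y ^ 2) ^ 2 + 1
  e3 (4 * y * (x ^ 6 + 3 * x ^ 4 * y ^ 2 + 3 * x ^ 2 * (y ^ 4 + 1) + y ^ 6 - y ^ 2) / D ^ 2)
    (-(4 * x * (x ^ 6 + 3 * x ^ 4 * y ^ 2 + 3 * x ^ 2 * y ^ 4 + x ^ 2 + y ^ 6 - 3 * y ^ 2)) / D ^ 2)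
    (8 * y * (x ^ 2 + y ^ 2) ^ 2 / D ^ 2)

def Zm21 : ℂ → R3 := fun z =>
  let x := z.re; let y := z.im; let D := (x ^ 2 + y ^ 2) ^ 2 + 1
  e3 0 (-(((x ^ 2 + y ^ 2) ^ 2 - 1)) / D) (4 * x * y / D)

def Zm22 : ℂ → R3 := fun z =>
  let x := z.re; let y := z.im; let D := (x ^ 2 + y ^ 2) ^ 2 + 1
  e3 (-(((x ^ 2 + y ^ 2) ^ 2 - 1)) / D) 0 (2 * (x - y) * (x + y) / D)

def K1 : ℂ → R3 := fun z =>
  let x := z.re; let y := z.im; let D := (x ^ 2 + y ^ 2) ^ 2 + 1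
  e3 (2 * (x ^ 2 - y ^ 2) * ((x ^ 2 + y ^ 2) ^ 2 - 1) / D ^ 2)
    (4 * x * y * ((x ^ 2 + y ^ 2) ^ 2 - 1) / D ^ 2)
    (((x ^ 2 + y ^ 2) ^ 2 - 1) ^ 2 / D ^ 2)

def K2 : ℂ → R3 := fun z =>
  let x := z.re; let y := z.im; let D := (x ^ 2 + y ^ 2) ^ 2 + 1
  e3 (2 * (x ^ 2 - y ^ 2) ^ 2 / D ^ 2)
    (4 * x * y * (x ^ 2 - y ^ 2) / D ^ 2)
    ((x ^ 2 - y ^ 2) * ((x ^ 2 + y ^ 2) ^ 2 - 1) / D ^ 2)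

def K3 : ℂ → R3 := fun z =>
  let x := z.re; let y := z.im; let D := (x ^ 2 + y ^ 2) ^ 2 + 1
  e3 (4 * x * y * (x ^ 2 - y ^ 2) / D ^ 2)
    (8 * x ^ 2 * y ^ 2 / D ^ 2)
    (2 * x * y * ((x ^ 2 + y ^ 2) ^ 2 - 1) / D ^ 2)

/-- The thirteen bounded kernel maps, as a family indexed by `Fin 13`. -/
def kernelBasis : Fin 13 → (ℂ → R3) :=
  ![Z01, Z02, Z11, Z12, Z21, Z22, Zm11, Zm12, Zm21, Zm22, K1, K2, K3]

/-!
In logarithmic polar coordinates `z = exp w`, `w = t + iθ`, the bubble becomes `ω(w) = W(exp w)`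
and, by conformal invariance, a bounded solution `v` becomes a bounded `2πi`-periodic solution
`V(w) = v(exp w)` of the H-system linearized at `ω`. There the normal and tangential parts of `V`
decouple.

* The normal part `⟪ω, V⟫` solves the Jacobi equation `Δf = -8 sech² (2t) f`. A Darboux transform
  turns the equation `φ'' = (k² - 8 sech² (2t)) φ` of its `k`-th Fourier mode into `g'' = k² g`, so
  that bounded modes exist only for `k = 0, ±2`; hence `⟪ω, V⟫ = ⟪q, ω⟫` for a constant `q`.
* The tangential part, read as a complex function in the frame `∂₁ ω, ∂₂ ω`, solves a
  `∂̄`-equation whose source is the linearized Hopf differential, a holomorphic function. Mode by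
  mode, the decay forced by the boundedness of `V` and a Riccati inequality on the whole line kill
  the source, and the modes that are left are `sech² (2t) e^{kw}` with `|k| ≤ 2`.

Hence `v(z) = DW(z)[Q(z) / z] + ⟪q, W(z)⟫ W(z)` with `Q` a complex polynomial of degree at most `4`
and `q ∈ ℝ³`, which leaves `10 + 3` real parameters; the data `(Q, q)` determine `v` because `DW(z)`
is injective for `z ≠ 0` and orthogonal to `W(z)`.
-/

section ODE

theorem nonpos_of_mul_exp_le {c δ M : ℝ} (hδ : 0 < δ)
    (h : ∀ s, 0 ≤ s → c * Real.exp (δ * s) ≤ M) : c ≤ 0 := by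
  by_contra! hc
  have hM : 0 < M := hc.trans_le (by simpa using h 0 le_rfl)
  have hMc := h (M / c / δ) (by positivity)
  rw [mul_div_cancel₀ _ hδ.ne'] at hMc
  have hexp := mul_le_mul_of_nonneg_left (Real.add_one_le_exp (M / c)) hc.le
  rw [mul_add, mul_div_cancel₀ _ hc.ne'] at hexp
  linarith

theorem hasDerivAt_cexp_const_mul_ofReal (c : ℂ) (t : ℝ) :
    HasDerivAt (fun t : ℝ => Complex.exp (c * t)) (c * Complex.exp (c * t)) t := by
  simpa [mul_comm] using ((hasDerivAt_id t).ofReal_comp.const_mul c).cexp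

theorem exists_eq_mul_of_hasDerivAt_mul {a f g : ℝ → ℂ}
    (hf : ∀ t, HasDerivAt f (a t * f t) t) (hg : ∀ t, HasDerivAt g (a t * g t) t)
    (hg0 : ∀ t, g t ≠ 0) : ∃ c, ∀ t, f t = c * g t := by
  have hquot (t : ℝ) : HasDerivAt (fun t => f t / g t) 0 t :=
    ((hf t).div (hg t) (hg0 t)).congr_deriv (by ring)
  refine ⟨f 0 / g 0, fun t => ?_⟩
  rw [← is_const_of_deriv_eq_zero (fun t => (hquot t).differentiableAt)
    (fun t => (hquot t).deriv) t 0, div_mul_cancel₀ _ (hg0 t)]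

theorem eq_zero_of_hasDerivAt_const_mul_of_bounded {k : ℝ} (hk : k ≠ 0) {f : ℝ → ℂ} {M : ℝ}
    (hf : ∀ t, HasDerivAt f (k * f t) t) (hM : ∀ t, ‖f t‖ ≤ M) : f = 0 := by
  obtain ⟨c, hc⟩ := exists_eq_mul_of_hasDerivAt_mul hf
    (hasDerivAt_cexp_const_mul_ofReal k) fun _ => Complex.exp_ne_zero _
  have hgrowth : ∀ s, 0 ≤ s → ‖c‖ * Real.exp (k ^ 2 * s) ≤ M := fun s _ => by
    have := hM (k * s)
    rwa [hc, norm_mul, Complex.norm_exp, ← Complex.ofReal_mul, Complex.ofReal_re, ← mul_assoc,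
      ← sq] at this
  have hc0 : c = 0 := norm_le_zero_iff.mp (nonpos_of_mul_exp_le (by positivity) hgrowth)
  funext t
  simp [hc, hc0]

theorem eq_zero_of_hasDerivAt_const_of_bounded {f : ℝ → ℂ} {d : ℂ} {M : ℝ}
    (hf : ∀ t, HasDerivAt f d t) (hM : ∀ t, ‖f t‖ ≤ M) : d = 0 := by
  have hlin (t : ℝ) : HasDerivAt (fun t : ℝ => f t - t * d) 0 t := by
    simpa using (hf t).fun_sub ((hasDerivAt_id t).ofReal_comp.mul_const d)
  have haffine (t : ℝ) : t * d = f t - f 0 := by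
    have := is_const_of_deriv_eq_zero (fun t => (hlin t).differentiableAt)
      (fun t => (hlin t).deriv) t 0
    simp only [Complex.ofReal_zero, zero_mul, sub_zero] at this
    linear_combination -this
  by_contra hd
  have hfar := (norm_sub_le _ _).trans (add_le_add (hM ((2 * M + 1) / ‖d‖)) (hM 0))
  have hd' := norm_pos_iff.mpr hd
  have hM0 := (norm_nonneg _).trans (hM 0)
  rw [← haffine, norm_mul, Complex.norm_real, Real.norm_of_nonneg (by positivity),
    div_mul_cancel₀ _ hd'.ne'] at hfar
  linarith

/- The mean value inequality applied to `s ↦ f s - s • f' t` on `[t, t + 1]`. -/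
theorem norm_deriv_le_of_norm_le {E : Type*} [NormedAddCommGroup E] [NormedSpace ℝ E]
    {f f' f'' : ℝ → E} {B M : ℝ} (hf : ∀ t, HasDerivAt f (f' t) t)
    (hf' : ∀ t, HasDerivAt f' (f'' t) t) (hB : ∀ t, ‖f t‖ ≤ B) (hM : ∀ t, ‖f'' t‖ ≤ M) (t : ℝ) :
    ‖f' t‖ ≤ 2 * B + M := by
  have hslope : ∀ s ∈ Set.Icc t (t + 1), ‖f' s - f' t‖ ≤ M := fun s hs =>
    (norm_image_sub_le_of_norm_deriv_le_segment' (fun x _ => (hf' x).hasDerivWithinAt)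
      (fun x _ => hM x) s hs).trans
      (mul_le_of_le_one_right ((norm_nonneg _).trans (hM 0)) (by linarith [hs.2]))
  have hstep : ‖(f (t + 1) - (t + 1) • f' t) - (f t - t • f' t)‖ ≤ M := by
    simpa using norm_image_sub_le_of_norm_deriv_le_segment' (f := fun s => f s - s • f' t)
      (fun x _ => by
        simpa using ((hf x).fun_sub ((hasDerivAt_id x).smul_const (f' t))).hasDerivWithinAt)
      (fun x hx => hslope x ⟨hx.1, hx.2.le⟩) (t + 1) ⟨by linarith, le_rfl⟩
  calc ‖f' t‖ = ‖f (t + 1) - f t - ((f (t + 1) - (t + 1) • f' t) - (f t - t • f' t))‖ := by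
        congr 1; module
    _ ≤ ‖f (t + 1)‖ + ‖f t‖ + M := (norm_sub_le _ _).trans (add_le_add (norm_sub_le _ _) hstep)
    _ ≤ 2 * B + M := by linarith [hB t, hB (t + 1)]

/- Past a point where `q > 0`, the function `-1 / q` grows at rate at least `1 / C`, so it would
become nonnegative in finite time. -/
theorem nonpos_of_sq_le_mul_deriv {q q' : ℝ → ℝ} {C : ℝ} (hC : 0 < C)
    (hq : ∀ t, HasDerivAt q (q' t) t) (h : ∀ t, q t ^ 2 ≤ C * q' t) (t₀ : ℝ) : q t₀ ≤ 0 := by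
  by_contra! hpos
  have hmono : Monotone q := monotone_of_hasDerivAt_nonneg hq fun t =>
    nonneg_of_mul_nonneg_right ((sq_nonneg _).trans (h t)) hC
  have hqpos : ∀ t ∈ Set.Ici t₀, 0 < q t := fun t ht => hpos.trans_le (hmono ht)
  have hderiv : ∀ t ∈ Set.Ici t₀,
      HasDerivAt (fun t => -(q t)⁻¹ - t / C) (q' t / q t ^ 2 - 1 / C) t := fun t ht =>
    (((hq t).inv (hqpos t ht).ne').neg.sub ((hasDerivAt_id t).div_const C)).congr_deriv (by ring)
  have hinv : MonotoneOn (fun t => -(q t)⁻¹ - t / C) (Set.Ici t₀) := by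
    refine monotoneOn_of_hasDerivWithinAt_nonneg (f' := fun t => q' t / q t ^ 2 - 1 / C)
      (convex_Ici t₀) (fun t ht => (hderiv t ht).continuousAt.continuousWithinAt)
      (fun t ht => (hderiv t (interior_subset ht)).hasDerivWithinAt) fun t ht => ?_
    have hqt := hqpos t (interior_subset ht)
    rw [sub_nonneg, div_le_div_iff₀ hC (by positivity)]
    linarith [h t]
  have hlate : t₀ ≤ t₀ + C / q t₀ := by linarith [div_pos hC hpos]
  have hblow := hinv Set.self_mem_Ici hlate hlate
  have hend := inv_pos.mpr (hqpos _ hlate)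
  have hrate : (t₀ + C / q t₀) / C = t₀ / C + (q t₀)⁻¹ := by field_simp
  simp only [hrate] at hblow
  linarith

theorem eq_zero_of_sq_le_mul_deriv {q q' : ℝ → ℝ} {C : ℝ} (hC : 0 < C)
    (hq : ∀ t, HasDerivAt q (q' t) t) (h : ∀ t, q t ^ 2 ≤ C * q' t) : q = 0 := by
  have hreflect : ∀ t, HasDerivAt (fun t => -q (-t)) (q' (-t)) t := fun t =>
    ((hq (-t)).scomp t (hasDerivAt_neg t)).neg.congr_deriv (by simp)
  funext t
  refine le_antisymm (nonpos_of_sq_le_mul_deriv hC hq h t) ?_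
  simpa using nonpos_of_sq_le_mul_deriv hC hreflect (fun t => by simpa using h (-t)) (-t)

end ODE

/-- `sech (2t)`: half the conformal factor of the bubble in logarithmic polar coordinates, and the
horizontal component of the bubble there. -/
def sech₂ (t : ℝ) : ℝ := (Real.cosh (2 * t))⁻¹

/-- `tanh (2t)`: the vertical component of the bubble in logarithmic polar coordinates. -/
def tanh₂ (t : ℝ) : ℝ := Real.tanh (2 * t)

theorem sech₂_pos (t : ℝ) : 0 < sech₂ t := inv_pos.mpr (Real.cosh_pos _)

theorem ofReal_sech₂_ne_zero (t : ℝ) : (sech₂ t : ℂ) ≠ 0 :=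
  Complex.ofReal_ne_zero.mpr (sech₂_pos t).ne'

theorem sech₂_sq_add_tanh₂_sq (t : ℝ) : sech₂ t ^ 2 + tanh₂ t ^ 2 = 1 := by
  have hcosh := (Real.cosh_pos (2 * t)).ne'
  rw [sech₂, tanh₂, Real.tanh_eq_sinh_div_cosh]
  field_simp
  linarith [Real.cosh_sq (2 * t)]

theorem sech₂_le_one (t : ℝ) : sech₂ t ≤ 1 := inv_le_one_of_one_le₀ (Real.one_le_cosh _)

theorem abs_tanh₂_le_one (t : ℝ) : |tanh₂ t| ≤ 1 :=
  abs_le_one_iff_mul_self_le_one.mpr (by nlinarith [sech₂_sq_add_tanh₂_sq t, sq_nonneg (sech₂ t)])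

theorem hasDerivAt_sech₂ (t : ℝ) : HasDerivAt sech₂ (-2 * sech₂ t * tanh₂ t) t := by
  refine (((hasDerivAt_id t).const_mul 2).cosh.inv (Real.cosh_pos _).ne').congr_deriv ?_
  rw [sech₂, tanh₂, Real.tanh_eq_sinh_div_cosh]
  simp only [id]
  field_simp

theorem hasDerivAt_tanh₂ (t : ℝ) : HasDerivAt tanh₂ (2 * sech₂ t ^ 2) t := by
  have htanh : tanh₂ = fun t => Real.sinh (2 * t) / Real.cosh (2 * t) :=
    funext fun t => Real.tanh_eq_sinh_div_cosh _
  have hlin : HasDerivAt (fun t : ℝ => 2 * t) 2 t := by simpa using (hasDerivAt_id t).const_mul 2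
  rw [htanh]
  refine (hlin.sinh.div hlin.cosh (Real.cosh_pos _).ne').congr_deriv ?_
  rw [sech₂, inv_pow, ← div_eq_mul_inv]
  congr 1
  linear_combination 2 * Real.cosh_sq (2 * t)

theorem hasDerivAt_ofReal_sech₂ (t : ℝ) :
    HasDerivAt (fun t => (sech₂ t : ℂ)) (-2 * sech₂ t * tanh₂ t) t :=
  (hasDerivAt_sech₂ t).ofReal_comp.congr_deriv (by push_cast; ring)

theorem hasDerivAt_ofReal_tanh₂ (t : ℝ) :
    HasDerivAt (fun t => (tanh₂ t : ℂ)) (2 * sech₂ t ^ 2) t :=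
  (hasDerivAt_tanh₂ t).ofReal_comp.congr_deriv (by push_cast; ring)

theorem ofReal_sech₂_sq_add_tanh₂_sq (t : ℝ) : (sech₂ t : ℂ) ^ 2 + (tanh₂ t : ℂ) ^ 2 = 1 :=
  mod_cast sech₂_sq_add_tanh₂_sq t

section JacobiModes

variable {k B : ℝ} {φ φ' : ℝ → ℂ}

/-- The Darboux transform `φ' + 2 tanh (2t) φ` intertwining `φ'' = (k² - 8 sech² (2t)) φ` with the
free equation `g'' = k² g`. -/
def darboux (φ φ' : ℝ → ℂ) (t : ℝ) : ℂ := φ' t + 2 * tanh₂ t * φ t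

theorem hasDerivAt_darboux (hφ : ∀ t, HasDerivAt φ (φ' t) t)
    (hφ' : ∀ t, HasDerivAt φ' ((k ^ 2 - 8 * sech₂ t ^ 2) * φ t) t) (t : ℝ) :
    HasDerivAt (darboux φ φ') ((k ^ 2 - 4) * φ t + 2 * tanh₂ t * darboux φ φ' t) t := by
  refine ((hφ' t).add (((hasDerivAt_ofReal_tanh₂ t).const_mul 2).mul (hφ t))).congr_deriv ?_
  rw [darboux]
  linear_combination -4 * φ t * ofReal_sech₂_sq_add_tanh₂_sq t

theorem hasDerivAt_deriv_darboux (hφ : ∀ t, HasDerivAt φ (φ' t) t)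
    (hφ' : ∀ t, HasDerivAt φ' ((k ^ 2 - 8 * sech₂ t ^ 2) * φ t) t) (t : ℝ) :
    HasDerivAt (fun t => (k ^ 2 - 4) * φ t + 2 * tanh₂ t * darboux φ φ' t)
      (k ^ 2 * darboux φ φ' t) t := by
  refine (((hφ t).const_mul _).add (((hasDerivAt_ofReal_tanh₂ t).const_mul 2).mul
    (hasDerivAt_darboux hφ hφ' t))).congr_deriv ?_
  simp only [darboux]
  linear_combination (4 * (φ' t + 2 * tanh₂ t * φ t)) * ofReal_sech₂_sq_add_tanh₂_sq t

theorem norm_darboux_le (hφ : ∀ t, HasDerivAt φ (φ' t) t)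
    (hφ' : ∀ t, HasDerivAt φ' ((k ^ 2 - 8 * sech₂ t ^ 2) * φ t) t) (hB : ∀ t, ‖φ t‖ ≤ B) (t : ℝ) :
    ‖darboux φ φ' t‖ ≤ 2 * B + (k ^ 2 + 8) * B + 2 * B := by
  have hpot (t : ℝ) : ‖((k : ℂ) ^ 2 - 8 * (sech₂ t : ℂ) ^ 2) * φ t‖ ≤ (k ^ 2 + 8) * B := by
    have hcoef : |k ^ 2 - 8 * sech₂ t ^ 2| ≤ k ^ 2 + 8 := by
      have hsech := sech₂_le_one t
      rw [abs_le]
      constructor <;> nlinarith [sech₂_pos t, sq_nonneg k]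
    rw [norm_mul]
    gcongr
    · exact_mod_cast hcoef
    · exact hB t
  have hdrift : ‖2 * (tanh₂ t : ℂ) * φ t‖ ≤ 2 * B := by
    rw [mul_assoc, norm_mul, norm_mul, Complex.norm_ofNat, Complex.norm_real]
    gcongr
    exact (mul_le_of_le_one_left (norm_nonneg _) (abs_tanh₂_le_one t)).trans (hB t)
  exact (norm_add_le _ _).trans (add_le_add (norm_deriv_le_of_norm_le hφ hφ' hB hpot t) hdrift)

theorem norm_deriv_darboux_le (hφ : ∀ t, HasDerivAt φ (φ' t) t)
    (hφ' : ∀ t, HasDerivAt φ' ((k ^ 2 - 8 * sech₂ t ^ 2) * φ t) t) (hB : ∀ t, ‖φ t‖ ≤ B) :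
    ∃ M, ∀ t, ‖(k ^ 2 - 4) * φ t + 2 * tanh₂ t * darboux φ φ' t‖ ≤ M :=
  ⟨_, norm_deriv_le_of_norm_le (hasDerivAt_darboux hφ hφ') (hasDerivAt_deriv_darboux hφ hφ')
    (norm_darboux_le hφ hφ' hB) fun t => by
      rw [norm_mul]
      exact mul_le_mul_of_nonneg_left (norm_darboux_le hφ hφ' hB t) (norm_nonneg _)⟩

/- `g' + k g` solves `m' = k m` and `g' - k g` solves `m' = -k m`. -/
theorem darboux_eq_zero (hk : k ≠ 0) (hφ : ∀ t, HasDerivAt φ (φ' t) t)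
    (hφ' : ∀ t, HasDerivAt φ' ((k ^ 2 - 8 * sech₂ t ^ 2) * φ t) t) (hB : ∀ t, ‖φ t‖ ≤ B) :
    darboux φ φ' = 0 := by
  set g := darboux φ φ' with hg
  set g' : ℝ → ℂ := fun t => (k ^ 2 - 4) * φ t + 2 * tanh₂ t * g t with hg'
  obtain ⟨M, hM⟩ := norm_deriv_darboux_le hφ hφ' hB
  have hvanish {κ : ℝ} (hκ : κ ≠ 0) (hκk : κ ^ 2 = k ^ 2) : (fun t => g' t + κ * g t) = 0 := by
    have hκk' : (κ : ℂ) ^ 2 = k ^ 2 := mod_cast hκk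
    refine eq_zero_of_hasDerivAt_const_mul_of_bounded (k := κ) hκ (fun t => ?_) (fun t =>
      (norm_add_le _ _).trans (add_le_add (hM t) ((norm_mul _ _).trans_le
        (mul_le_mul_of_nonneg_left (norm_darboux_le hφ hφ' hB t) (norm_nonneg _)))))
    refine ((hasDerivAt_deriv_darboux hφ hφ' t).add
      ((hasDerivAt_darboux hφ hφ' t).const_mul (κ : ℂ))).congr_deriv ?_
    simp only [← hg, hg']
    linear_combination -g t * hκk'
  funext t
  have hplus := congrFun (hvanish hk rfl) t
  have hminus := congrFun (hvanish (neg_ne_zero.mpr hk) (neg_sq k)) t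
  have hk' : (2 * k : ℂ) ≠ 0 := mod_cast mul_ne_zero two_ne_zero hk
  refine (mul_eq_zero.mp ?_).resolve_left hk'
  push_cast [Pi.zero_apply] at hplus hminus
  linear_combination hplus - hminus

theorem mode_eq_const_mul_sech₂ (hk : k ≠ 0) (hφ : ∀ t, HasDerivAt φ (φ' t) t)
    (hφ' : ∀ t, HasDerivAt φ' ((k ^ 2 - 8 * sech₂ t ^ 2) * φ t) t) (hB : ∀ t, ‖φ t‖ ≤ B) :
    ∃ c : ℂ, ∀ t, φ t = c * sech₂ t := by
  refine exists_eq_mul_of_hasDerivAt_mul (a := fun t => -2 * tanh₂ t) (fun t => ?_) (fun t => ?_)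
    ofReal_sech₂_ne_zero
  · refine (hφ t).congr_deriv ?_
    have hg := congrFun (darboux_eq_zero hk hφ hφ' hB) t
    rw [darboux, Pi.zero_apply] at hg
    linear_combination hg
  · exact (hasDerivAt_ofReal_sech₂ t).congr_deriv (by ring)

theorem mode_eq_zero (hk : k ≠ 0) (hk2 : k ^ 2 ≠ 4) (hφ : ∀ t, HasDerivAt φ (φ' t) t)
    (hφ' : ∀ t, HasDerivAt φ' ((k ^ 2 - 8 * sech₂ t ^ 2) * φ t) t) (hB : ∀ t, ‖φ t‖ ≤ B) :
    φ = 0 := by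
  funext t
  have hzero := hasDerivAt_darboux hφ hφ' t
  rw [darboux_eq_zero hk hφ hφ' hB, Pi.zero_apply, mul_zero, add_zero] at hzero
  replace hzero := hzero.unique (hasDerivAt_const t 0)
  exact (mul_eq_zero.mp hzero).resolve_left (mod_cast sub_ne_zero.mpr hk2)

/- For `k = 0` the transform `g` is affine and bounded, hence constant, and the equation
`g' = -4 φ + 2 tanh (2t) g` can be solved for `φ`. -/
theorem zero_mode_eq_const_mul_tanh₂ (hφ : ∀ t, HasDerivAt φ (φ' t) t)
    (hφ' : ∀ t, HasDerivAt φ' (-8 * sech₂ t ^ 2 * φ t) t) (hB : ∀ t, ‖φ t‖ ≤ B) :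
    ∃ c : ℂ, ∀ t, φ t = c * tanh₂ t := by
  replace hφ' (t : ℝ) : HasDerivAt φ' (((0 : ℝ) ^ 2 - 8 * sech₂ t ^ 2) * φ t) t :=
    (hφ' t).congr_deriv (by push_cast; ring)
  have hgg (t : ℝ) := hasDerivAt_deriv_darboux hφ hφ' t
  simp only [Complex.ofReal_zero, zero_pow two_ne_zero, zero_mul, zero_sub] at hgg
  have hconst (t : ℝ) : -4 * φ t + 2 * tanh₂ t * darboux φ φ' t =
      -4 * φ 0 + 2 * tanh₂ 0 * darboux φ φ' 0 :=
    is_const_of_deriv_eq_zero (fun t => (hgg t).differentiableAt) (fun t => (hgg t).deriv) t 0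
  have hslope : -4 * φ 0 + 2 * tanh₂ 0 * darboux φ φ' 0 = 0 :=
    eq_zero_of_hasDerivAt_const_of_bounded (fun t =>
      (hasDerivAt_darboux hφ hφ' t).congr_deriv (by rw [← hconst t]; push_cast; ring))
      (norm_darboux_le hφ hφ' hB)
  have hg (t : ℝ) : HasDerivAt (darboux φ φ') 0 t :=
    (hasDerivAt_darboux hφ hφ' t).congr_deriv (by rw [← hslope, ← hconst t]; push_cast; ring)
  refine ⟨darboux φ φ' 0 / 2, fun t => ?_⟩
  have hgt : darboux φ φ' t = darboux φ φ' 0 :=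
    is_const_of_deriv_eq_zero (fun t => (hg t).differentiableAt) (fun t => (hg t).deriv) t 0
  have := (hconst t).trans hslope
  rw [hgt] at this
  linear_combination -this / 4

end JacobiModes

section DbarModes

variable {k B : ℝ} {C : ℂ} {h : ℝ → ℂ}

theorem hasDerivAt_exp_mul_div_sech₂_sq
    (hh : ∀ t, HasDerivAt h ((k - 4 * tanh₂ t) * h t + 2 * (C * Complex.exp (-k * t))) t) (t : ℝ) :
    HasDerivAt (fun t : ℝ => Complex.exp (-k * t) * h t / (sech₂ t : ℂ) ^ 2)
      ((2 * (Real.exp (-k * t) / sech₂ t) ^ 2 : ℝ) • C) t := by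
  have hS := ofReal_sech₂_ne_zero t
  refine (((hasDerivAt_cexp_const_mul_ofReal (-k) t).mul (hh t)).div
    ((hasDerivAt_ofReal_sech₂ t).pow 2) (pow_ne_zero 2 hS)).congr_deriv ?_
  simp only [Pi.mul_apply, Pi.pow_apply, Complex.real_smul]
  push_cast
  field_simp
  ring

/- With `p = e^{-kt} h / sech² (2t)`, the function `q = ⟪C, p⟫` satisfies `q² ≤ (B² / 2) q'`,
a Riccati inequality on the whole line. -/
theorem source_eq_zero_of_norm_le_sech₂
    (hh : ∀ t, HasDerivAt h ((k - 4 * tanh₂ t) * h t + 2 * (C * Complex.exp (-k * t))) t)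
    (hB : ∀ t, ‖h t‖ ≤ B * sech₂ t) : C = 0 := by
  set p : ℝ → ℂ := fun t => Complex.exp (-k * t) * h t / (sech₂ t : ℂ) ^ 2
  set r : ℝ → ℝ := fun t => Real.exp (-k * t) / sech₂ t
  have hp (t : ℝ) : ‖p t‖ ≤ B * r t := by
    have hS := sech₂_pos t
    have hexp : ‖Complex.exp (-k * t)‖ = Real.exp (-k * t) := by
      rw [Complex.norm_exp]; simp
    rw [norm_div, norm_mul, norm_pow, Complex.norm_of_nonneg hS.le, hexp,
      div_le_iff₀ (by positivity)]
    calc Real.exp (-k * t) * ‖h t‖ ≤ Real.exp (-k * t) * (B * sech₂ t) := by gcongr; exact hB t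
      _ = B * r t * sech₂ t ^ 2 := by simp only [r]; field_simp
  have hderiv (t : ℝ) : HasDerivAt (fun t => inner ℝ C (p t)) (2 * (r t * ‖C‖) ^ 2) t := by
    refine ((hasDerivAt_const t C).inner ℝ (hasDerivAt_exp_mul_div_sech₂_sq hh t)).congr_deriv ?_
    rw [real_inner_smul_right, real_inner_self_eq_norm_sq, inner_zero_left]
    ring
  have hRiccati (t : ℝ) : inner ℝ C (p t) ^ 2 ≤ (B ^ 2 / 2 + 1) * (2 * (r t * ‖C‖) ^ 2) := by
    have hCS := pow_le_pow_left₀ (abs_nonneg _) ((abs_real_inner_le_norm C (p t)).trans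
      (mul_le_mul_of_nonneg_left (hp t) (norm_nonneg C))) 2
    rw [sq_abs] at hCS
    nlinarith [sq_nonneg (r t * ‖C‖)]
  have hzero := (hderiv 0).unique (by
    rw [eq_zero_of_sq_le_mul_deriv (by positivity) hderiv hRiccati]
    exact hasDerivAt_const 0 (0 : ℝ))
  simpa [r, (sech₂_pos 0).ne'] using hzero

theorem eq_const_mul_sech₂_sq_mul_exp
    (hh : ∀ t, HasDerivAt h ((k - 4 * tanh₂ t) * h t) t) :
    ∃ c : ℂ, ∀ t, h t = c * ((sech₂ t : ℂ) ^ 2 * Complex.exp (k * t)) := by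
  refine exists_eq_mul_of_hasDerivAt_mul hh (fun t => ?_) fun t =>
    mul_ne_zero (pow_ne_zero 2 (ofReal_sech₂_ne_zero t)) (Complex.exp_ne_zero _)
  refine (((hasDerivAt_ofReal_sech₂ t).pow 2).mul
    (hasDerivAt_cexp_const_mul_ofReal k t)).congr_deriv ?_
  simp only [Pi.pow_apply]
  ring

theorem cosh_le_exp_abs (x : ℝ) : Real.cosh x ≤ Real.exp |x| := by
  rw [← Real.cosh_abs, Real.cosh_eq]
  linarith [Real.exp_le_exp.mpr (neg_le_self (abs_nonneg x))]

/- `sech² (2t) e^{kt}` decays slower than `sech (2t)` in the direction of the sign of `k`. -/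
theorem const_eq_zero_of_norm_le_sech₂ {c : ℂ} (hk : 2 < |k|)
    (hB : ∀ t : ℝ, ‖c * ((sech₂ t : ℂ) ^ 2 * Complex.exp (k * t))‖ ≤ B * sech₂ t) : c = 0 := by
  have hB0 : 0 ≤ B := nonneg_of_mul_nonneg_left ((norm_nonneg _).trans (hB 0)) (sech₂_pos 0)
  have hcosh (t : ℝ) : ‖c‖ * Real.exp (k * t) ≤ B * Real.exp |2 * t| := by
    have ht := hB t
    have hS := sech₂_pos t
    have hexp : ‖Complex.exp (k * t)‖ = Real.exp (k * t) := by
      rw [Complex.norm_exp]; simp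
    rw [norm_mul, norm_mul, norm_pow, Complex.norm_of_nonneg hS.le, hexp] at ht
    calc ‖c‖ * Real.exp (k * t) ≤ B * (sech₂ t)⁻¹ := by
          rw [← div_eq_mul_inv, le_div_iff₀ hS]
          refine le_of_mul_le_mul_right ?_ hS
          linarith
      _ ≤ B * Real.exp |2 * t| := by
          rw [sech₂, inv_inv]
          gcongr
          exact cosh_le_exp_abs _
  refine norm_le_zero_iff.mp (nonpos_of_mul_exp_le (δ := |k| * (|k| - 2)) (M := B)
    (mul_pos (by linarith) (by linarith)) fun s hs => ?_)
  have hks := hcosh (k * s)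
  have hrate : |2 * (k * s)| = 2 * |k| * s := by
    rw [abs_mul, abs_mul, abs_of_nonneg hs, abs_two, mul_assoc]
  have hsplit : k * (k * s) = |k| * (|k| - 2) * s + 2 * |k| * s := by
    linear_combination -s * sq_abs k
  rw [hrate, hsplit, Real.exp_add, ← mul_assoc] at hks
  exact le_of_mul_le_mul_right hks (Real.exp_pos _)

end DbarModes

/-- The derivative of `u` in the constant direction `e`; the directions `1` and `I` give the
partial derivatives in the real coordinates of `ℂ`. -/
def dirDeriv {E : Type*} [NormedAddCommGroup E] [NormedSpace ℝ E]
    (e : ℂ) (u : ℂ → E) (w : ℂ) : E := fderiv ℝ u w e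

local notation "∂₁" => dirDeriv 1
local notation "∂₂" => dirDeriv Complex.I

section DirectionalDerivatives

variable {E : Type*} [NormedAddCommGroup E] [NormedSpace ℝ E]

theorem contDiff_dirDeriv {n : WithTop ℕ∞} {u : ℂ → E} (hu : ContDiff ℝ (n + 1) u) (e : ℂ) :
    ContDiff ℝ n (dirDeriv e u) :=
  (hu.fderiv_right le_rfl).clm_apply contDiff_const

theorem contDiff_one_dirDeriv {u : ℂ → E} (hu : ContDiff ℝ 2 u) (e : ℂ) :
    ContDiff ℝ 1 (dirDeriv e u) :=
  contDiff_dirDeriv (by simpa only [one_add_one_eq_two] using hu) e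

theorem continuous_dirDeriv {u : ℂ → E} (hu : ContDiff ℝ 1 u) (e : ℂ) :
    Continuous (dirDeriv e u) :=
  (contDiff_dirDeriv (n := 0) (by simpa only [zero_add] using hu) e).continuous

theorem dirDeriv_dirDeriv {u : ℂ → E} (hu : ContDiff ℝ 2 u) (e f w : ℂ) :
    dirDeriv e (dirDeriv f u) w = fderiv ℝ (fderiv ℝ u) w e f := by
  have hu' : DifferentiableAt ℝ (fderiv ℝ u) w :=
    ((hu.fderiv_right (m := 1) (by norm_num)).differentiable one_ne_zero) w
  change fderiv ℝ (fun w => fderiv ℝ u w f) w e = _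
  rw [fderiv_clm_apply hu' (differentiableAt_const f)]
  simp

theorem dirDeriv_comm {u : ℂ → E} (hu : ContDiff ℝ 2 u) (e f w : ℂ) :
    dirDeriv e (dirDeriv f u) w = dirDeriv f (dirDeriv e u) w := by
  rw [dirDeriv_dirDeriv hu, dirDeriv_dirDeriv hu]
  exact hu.contDiffAt.isSymmSndFDerivAt (by simp) e f

theorem dirDeriv_periodic {u : ℂ → E} {p : ℂ} (hu : Function.Periodic u p) (e : ℂ) :
    Function.Periodic (dirDeriv e u) p := fun w => by
  rw [dirDeriv, dirDeriv, ← fderiv_comp_add_right, funext hu]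

theorem hasDerivAt_horizontal {u : ℂ → E} (hu : Differentiable ℝ u) (t θ : ℝ) :
    HasDerivAt (fun s : ℝ => u (s + θ * Complex.I)) (∂₁ u (t + θ * Complex.I)) t :=
  (hu _).hasFDerivAt.comp_hasDerivAt t ((hasDerivAt_id t).ofReal_comp.add_const (θ * Complex.I))

theorem hasDerivAt_vertical {u : ℂ → E} (hu : Differentiable ℝ u) (t θ : ℝ) :
    HasDerivAt (fun s : ℝ => u (t + s * Complex.I)) (∂₂ u (t + θ * Complex.I)) θ := by
  have hline : HasDerivAt (fun s : ℝ => t + s * Complex.I) Complex.I θ := by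
    simpa using ((hasDerivAt_id θ).ofReal_comp.mul_const Complex.I).const_add (t : ℂ)
  exact (hu _).hasFDerivAt.comp_hasDerivAt θ hline

end DirectionalDerivatives

section AngularFourier

variable {F G : ℂ → ℂ} {k : ℤ} {t : ℝ}

/-- The `k`-th Fourier coefficient of the restriction of `F` to the vertical circle
`t + i[0, 2π]` of the cylinder `ℂ / 2πiℤ`. -/
def angularCoeff (F : ℂ → ℂ) (k : ℤ) (t : ℝ) : ℂ :=
  fourierCoeffOn Real.two_pi_pos (fun θ => F (t + θ * Complex.I)) k

theorem fourier_coe_of_eq_two_pi {T : ℝ} (hT : T = 2 * Real.pi) (k : ℤ) (θ : ℝ) :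
    fourier k (θ : AddCircle T) = Complex.exp (k * (θ * Complex.I)) := by
  rw [fourier_coe_apply, hT]
  congr 1
  push_cast
  field_simp

theorem angularCoeff_eq_integral (F : ℂ → ℂ) (k : ℤ) (t : ℝ) :
    angularCoeff F k t = (2 * Real.pi)⁻¹ •
      ∫ θ in (0 : ℝ)..2 * Real.pi, Complex.exp (-k * (θ * Complex.I)) * F (t + θ * Complex.I) := by
  rw [angularCoeff, fourierCoeffOn_eq_integral]
  simp only [fourier_coe_of_eq_two_pi (sub_zero _), sub_zero, one_div, smul_eq_mul, Int.cast_neg]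

theorem angularCoeff_add (hF : Continuous F) (hG : Continuous G) (k : ℤ) (t : ℝ) :
    angularCoeff (fun w => F w + G w) k t = angularCoeff F k t + angularCoeff G k t := by
  simp only [angularCoeff_eq_integral, mul_add]
  rw [intervalIntegral.integral_add (Continuous.intervalIntegrable (by fun_prop) _ _)
    (Continuous.intervalIntegrable (by fun_prop) _ _), smul_add]

theorem angularCoeff_re_mul (a : ℝ → ℂ) (F : ℂ → ℂ) (k : ℤ) (t : ℝ) :
    angularCoeff (fun w => a w.re * F w) k t = a t * angularCoeff F k t := by
  rw [angularCoeff, angularCoeff, ← fourierCoeffOn.const_mul]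
  simp

theorem norm_exp_int_mul_ofReal_mul_I (k : ℤ) (θ : ℝ) :
    ‖Complex.exp (k * (θ * Complex.I))‖ = 1 := by
  rw [← fourier_coe_of_eq_two_pi rfl, fourier_apply, Circle.norm_coe]

theorem norm_angularCoeff_le {B : ℝ} (hB : ∀ θ : ℝ, ‖F (t + θ * Complex.I)‖ ≤ B) (k : ℤ) :
    ‖angularCoeff F k t‖ ≤ B := by
  have hint := intervalIntegral.norm_integral_le_of_norm_le_const (a := 0) (b := 2 * Real.pi)
    (f := fun θ : ℝ => Complex.exp (-k * (θ * Complex.I)) * F (t + θ * Complex.I)) (C := B)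
    fun θ _ => by
      rw [norm_mul, ← Int.cast_neg, norm_exp_int_mul_ofReal_mul_I, one_mul]
      exact hB θ
  rw [sub_zero, abs_of_pos Real.two_pi_pos, ← div_le_iff₀ Real.two_pi_pos] at hint
  rwa [angularCoeff_eq_integral, norm_smul, norm_inv, Real.norm_of_nonneg Real.two_pi_pos.le,
    ← div_eq_inv_mul]

theorem hasDerivAt_angularCoeff (hF : ContDiff ℝ 1 F) (k : ℤ) (t : ℝ) :
    HasDerivAt (angularCoeff F k) (angularCoeff (∂₁ F) k t) t := by
  have hF' : Continuous (∂₁ F) := continuous_dirDeriv hF 1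
  obtain ⟨B, hB⟩ := ((isCompact_closedBall t 1).prod
    (isCompact_uIcc (a := (0 : ℝ)) (b := 2 * Real.pi))).exists_bound_of_continuousOn
    (f := fun p : ℝ × ℝ => ∂₁ F (p.1 + p.2 * Complex.I)) (Continuous.continuousOn (by fun_prop))
  rw [funext (angularCoeff_eq_integral F k), angularCoeff_eq_integral]
  refine HasDerivAt.const_smul (2 * Real.pi)⁻¹
    (intervalIntegral.hasDerivAt_integral_of_dominated_loc_of_deriv_le
      (F := fun (t θ : ℝ) => Complex.exp (-k * (θ * Complex.I)) * F (t + θ * Complex.I))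
      (F' := fun (t θ : ℝ) => Complex.exp (-k * (θ * Complex.I)) * ∂₁ F (t + θ * Complex.I))
      (bound := fun _ => B) (Metric.closedBall_mem_nhds t one_pos) ?_ ?_ ?_ ?_ ?_ ?_).2
  · exact .of_forall fun s => Continuous.aestronglyMeasurable (by fun_prop)
  · exact Continuous.intervalIntegrable (by fun_prop) _ _
  · exact Continuous.aestronglyMeasurable (by fun_prop)
  · refine .of_forall fun θ hθ s hs => ?_
    rw [norm_mul, ← Int.cast_neg, norm_exp_int_mul_ofReal_mul_I, one_mul]
    exact hB (s, θ) ⟨hs, Set.uIoc_subset_uIcc hθ⟩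
  · exact intervalIntegrable_const
  · exact .of_forall fun θ _ s _ =>
      (hasDerivAt_horizontal (hF.differentiable one_ne_zero) s θ).const_mul _

theorem angularCoeff_dirDeriv_I (hF : ContDiff ℝ 1 F)
    (hper : Function.Periodic F (2 * Real.pi * Complex.I)) (k : ℤ) (t : ℝ) :
    angularCoeff (∂₂ F) k t = k * Complex.I * angularCoeff F k t := by
  have hderiv (θ : ℝ) := hasDerivAt_vertical (hF.differentiable one_ne_zero) t θ
  have hint : IntervalIntegrable (fun θ : ℝ => ∂₂ F (t + θ * Complex.I))
      MeasureTheory.volume 0 (2 * Real.pi) := by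
    have := continuous_dirDeriv hF Complex.I
    exact Continuous.intervalIntegrable (by fun_prop) _ _
  have hends : F (t + (2 * Real.pi : ℝ) * Complex.I) = F (t + (0 : ℝ) * Complex.I) := by
    simpa using hper t
  rcases eq_or_ne k 0 with rfl | hk
  · rw [angularCoeff_eq_integral]
    simp only [Int.cast_zero, neg_zero, zero_mul, Complex.exp_zero, one_mul, smul_zero,
      intervalIntegral.integral_eq_sub_of_hasDerivAt (fun θ _ => hderiv θ) hint, hends, sub_self]
  · have hk' : (k : ℂ) ≠ 0 := mod_cast hk
    rw [angularCoeff, angularCoeff,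
      fourierCoeffOn_of_hasDerivAt Real.two_pi_pos hk (fun θ _ => hderiv θ) hint, hends,
      sub_self, mul_zero, zero_sub, Complex.ofReal_zero, sub_zero]
    generalize fourierCoeffOn Real.two_pi_pos (fun θ : ℝ => ∂₂ F (t + θ * Complex.I)) k = c
    push_cast
    field_simp

/- The Fourier series of each circle is finite, so it converges pointwise. -/
theorem eq_sum_angularCoeff (hF : Continuous F)
    (hper : Function.Periodic F (2 * Real.pi * Complex.I)) {J : Finset ℤ}
    (hJ : ∀ k ∉ J, ∀ t, angularCoeff F k t = 0) (t θ : ℝ) :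
    F (t + θ * Complex.I) =
      ∑ k ∈ J, angularCoeff F k t * Complex.exp (k * (θ * Complex.I)) := by
  have : Fact (0 < 2 * Real.pi) := ⟨Real.two_pi_pos⟩
  have hcircle : Function.Periodic (fun θ : ℝ => F (t + θ * Complex.I)) (2 * Real.pi) := fun θ => by
    simpa [add_mul, add_assoc] using hper (t + θ * Complex.I)
  let f : C(AddCircle (2 * Real.pi), ℂ) :=
    ⟨hcircle.lift, continuous_coinduced_dom.mpr
      (show Continuous fun θ : ℝ => F (t + θ * Complex.I) by fun_prop)⟩
  have hcoeff (k : ℤ) : fourierCoeff f k = angularCoeff F k t := by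
    rw [fourierCoeff_eq_intervalIntegral _ _ 0, angularCoeff_eq_integral, zero_add, one_div]
    simp only [fourier_coe_of_eq_two_pi rfl, Int.cast_neg]
    rfl
  have hsupp (k : ℤ) (hk : k ∉ J) : fourierCoeff f k = 0 := (hcoeff k).trans (hJ k hk t)
  have hsum := (has_pointwise_sum_fourier_series_of_summable
    (summable_of_ne_finset_zero hsupp) (θ : AddCircle (2 * Real.pi))).unique
    (hasSum_sum_of_ne_finset_zero fun k hk => by rw [hsupp k hk, zero_smul])
  simp only [hcoeff, fourier_coe_of_eq_two_pi rfl, smul_eq_mul] at hsum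
  exact hsum

end AngularFourier

section JacobiEquation

variable {f : ℂ → ℂ} {B : ℝ}

theorem hasDerivAt_angularCoeff_dirDeriv_of_jacobi (hf : ContDiff ℝ 2 f)
    (hper : Function.Periodic f (2 * Real.pi * Complex.I))
    (heq : ∀ w, ∂₁ (∂₁ f) w + ∂₂ (∂₂ f) w = -8 * sech₂ w.re ^ 2 * f w) (k : ℤ) (t : ℝ) :
    HasDerivAt (angularCoeff (∂₁ f) k)
      ((((k : ℝ) : ℂ) ^ 2 - 8 * sech₂ t ^ 2) * angularCoeff f k t) t := by
  refine (hasDerivAt_angularCoeff (contDiff_one_dirDeriv hf 1) k t).congr_deriv ?_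
  have hsum := angularCoeff_re_mul (fun t => -8 * (sech₂ t : ℂ) ^ 2) f k t
  rw [← funext heq, angularCoeff_add (continuous_dirDeriv (contDiff_one_dirDeriv hf 1) 1)
      (continuous_dirDeriv (contDiff_one_dirDeriv hf Complex.I) Complex.I),
    angularCoeff_dirDeriv_I (contDiff_one_dirDeriv hf Complex.I)
      (dirDeriv_periodic hper Complex.I),
    angularCoeff_dirDeriv_I (hf.of_le one_le_two) hper] at hsum
  rw [Complex.ofReal_intCast]
  linear_combination hsum - k ^ 2 * angularCoeff f k t * Complex.I_sq

theorem exists_eq_of_jacobi (hf : ContDiff ℝ 2 f)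
    (hper : Function.Periodic f (2 * Real.pi * Complex.I)) (hB : ∀ w, ‖f w‖ ≤ B)
    (heq : ∀ w, ∂₁ (∂₁ f) w + ∂₂ (∂₂ f) w = -8 * sech₂ w.re ^ 2 * f w) :
    ∃ a b c : ℂ, ∀ t θ : ℝ, f (t + θ * Complex.I) =
      a * tanh₂ t + sech₂ t *
        (b * Complex.exp (2 * (θ * Complex.I)) + c * Complex.exp (-2 * (θ * Complex.I))) := by
  have hφ (k : ℤ) := hasDerivAt_angularCoeff (hf.of_le one_le_two) k
  have hφ' (k : ℤ) := hasDerivAt_angularCoeff_dirDeriv_of_jacobi hf hper heq k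
  have hφB (k : ℤ) (t : ℝ) : ‖angularCoeff f k t‖ ≤ B := norm_angularCoeff_le (fun θ => hB _) k
  obtain ⟨a, ha⟩ := zero_mode_eq_const_mul_tanh₂ (hφ 0)
    (fun t => (hφ' 0 t).congr_deriv (by push_cast; ring)) (hφB 0)
  obtain ⟨b, hb⟩ := mode_eq_const_mul_sech₂ (by norm_num) (hφ 2) (hφ' 2) (hφB 2)
  obtain ⟨c, hc⟩ := mode_eq_const_mul_sech₂ (by norm_num) (hφ (-2)) (hφ' (-2)) (hφB (-2))
  have hvanish : ∀ k ∉ ({0, 2, -2} : Finset ℤ), ∀ t, angularCoeff f k t = 0 := fun k hk t => by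
    simp only [Finset.mem_insert, Finset.mem_singleton, not_or] at hk
    have hk4 : k ^ 2 ≠ 4 := fun h => (sq_eq_sq_iff_eq_or_eq_neg.mp (h : k ^ 2 = 2 ^ 2)).elim
      hk.2.1 hk.2.2
    exact congrFun (mode_eq_zero (mod_cast hk.1) (mod_cast hk4) (hφ k) (hφ' k) (hφB k)) t
  refine ⟨a, b, c, fun t θ => ?_⟩
  rw [eq_sum_angularCoeff hf.continuous hper hvanish, Finset.sum_insert (by decide),
    Finset.sum_insert (by decide), Finset.sum_singleton, ha, hb, hc]
  push_cast
  rw [zero_mul, Complex.exp_zero]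
  ring

end JacobiEquation

section DbarEquation

variable {H K : ℂ → ℂ} {B : ℝ}

theorem exists_angularCoeff_eq_mul_exp (hK : ContDiff ℝ 1 K)
    (hper : Function.Periodic K (2 * Real.pi * Complex.I))
    (heq : ∀ w, ∂₁ K w = Complex.I * ∂₂ K w) (k : ℤ) :
    ∃ C : ℂ, ∀ t, angularCoeff K k t = C * Complex.exp (-(k : ℝ) * t) := by
  refine exists_eq_mul_of_hasDerivAt_mul (fun t => ?_)
    (hasDerivAt_cexp_const_mul_ofReal (-(k : ℝ))) fun _ => Complex.exp_ne_zero _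
  refine (hasDerivAt_angularCoeff hK k t).congr_deriv ?_
  rw [funext heq, angularCoeff_re_mul (fun _ => Complex.I), angularCoeff_dirDeriv_I hK hper,
    Complex.ofReal_intCast]
  linear_combination k * angularCoeff K k t * Complex.I_sq

theorem hasDerivAt_angularCoeff_of_dbar (hH : ContDiff ℝ 1 H) (hK : Continuous K)
    (hper : Function.Periodic H (2 * Real.pi * Complex.I))
    (heq : ∀ w, ∂₁ H w + Complex.I * ∂₂ H w = -4 * tanh₂ w.re * H w + 2 * K w) (k : ℤ) (t : ℝ) :
    HasDerivAt (angularCoeff H k)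
      (((k : ℝ) - 4 * tanh₂ t) * angularCoeff H k t + 2 * angularCoeff K k t) t := by
  refine (hasDerivAt_angularCoeff hH k t).congr_deriv ?_
  have htanh₂ : Continuous tanh₂ :=
    continuous_iff_continuousAt.mpr fun t => (hasDerivAt_tanh₂ t).continuousAt
  have htanh : Continuous fun w : ℂ => -4 * (tanh₂ w.re : ℂ) := by fun_prop
  have hsum := congrArg (angularCoeff · k t) (funext heq)
  rw [angularCoeff_add (continuous_dirDeriv hH 1)
      (continuous_const.fun_mul (continuous_dirDeriv hH Complex.I)),
    angularCoeff_re_mul (fun _ => Complex.I), angularCoeff_dirDeriv_I hH hper,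
    angularCoeff_add (htanh.fun_mul hH.continuous) (continuous_const.fun_mul hK),
    angularCoeff_re_mul (fun t => -4 * (tanh₂ t : ℂ)), angularCoeff_re_mul (fun _ => 2)] at hsum
  rw [Complex.ofReal_intCast]
  linear_combination hsum - k * angularCoeff H k t * Complex.I_sq

theorem exists_eq_of_dbar (hH : ContDiff ℝ 1 H) (hK : ContDiff ℝ 1 K)
    (hHper : Function.Periodic H (2 * Real.pi * Complex.I))
    (hKper : Function.Periodic K (2 * Real.pi * Complex.I))
    (hHeq : ∀ w, ∂₁ H w + Complex.I * ∂₂ H w = -4 * tanh₂ w.re * H w + 2 * K w)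
    (hKeq : ∀ w, ∂₁ K w = Complex.I * ∂₂ K w) (hB : ∀ w, ‖H w‖ ≤ B * sech₂ w.re) :
    ∃ c : ℤ → ℂ, ∀ t θ : ℝ, H (t + θ * Complex.I) = (sech₂ t : ℂ) ^ 2 *
      ∑ k ∈ Finset.Icc (-2) 2, c k * Complex.exp (k * (t + θ * Complex.I)) := by
  have hbound (k : ℤ) (t : ℝ) : ‖angularCoeff H k t‖ ≤ B * sech₂ t :=
    norm_angularCoeff_le (fun θ => by simpa using hB (t + θ * Complex.I)) k
  have hmode (k : ℤ) : ∃ c : ℂ, ∀ t,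
      angularCoeff H k t = c * ((sech₂ t : ℂ) ^ 2 * Complex.exp ((k : ℝ) * t)) := by
    obtain ⟨C, hC⟩ := exists_angularCoeff_eq_mul_exp hK hKper hKeq k
    have hh := hasDerivAt_angularCoeff_of_dbar hH hK.continuous hHper hHeq k
    simp only [hC] at hh
    have hC0 : C = 0 := source_eq_zero_of_norm_le_sech₂ hh (hbound k)
    exact eq_const_mul_sech₂_sq_mul_exp fun t => (hh t).congr_deriv (by rw [hC0]; ring)
  choose c hc using hmode
  have hvanish : ∀ k ∉ Finset.Icc (-2 : ℤ) 2, ∀ t, angularCoeff H k t = 0 := fun k hk t => by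
    have hk2 : 2 < |(k : ℝ)| := by
      rw [← Int.cast_abs]
      exact_mod_cast not_le.mp fun h => hk (Finset.mem_Icc.mpr (abs_le.mp h))
    rw [hc, const_eq_zero_of_norm_le_sech₂ (c := c k) hk2 fun t => hc k t ▸ hbound k t, zero_mul]
  refine ⟨c, fun t θ => ?_⟩
  rw [eq_sum_angularCoeff hH.continuous hHper hvanish, Finset.mul_sum]
  refine Finset.sum_congr rfl fun k _ => ?_
  rw [hc, mul_add, Complex.exp_add, Complex.ofReal_intCast]
  ring

end DbarEquation

section VectorAlgebra

open scoped RealInnerProductSpace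

@[simp] theorem e3_apply (a b c : ℝ) (i : Fin 3) : e3 a b c i = ![a, b, c] i := rfl

theorem inner_eq_coords (a b : R3) : ⟪a, b⟫ = a 0 * b 0 + a 1 * b 1 + a 2 * b 2 := by
  simp only [PiLp.inner_apply, Fin.sum_univ_three, RCLike.inner_apply, conj_trivial]
  ring

theorem cross.self_eq_zero (a : R3) : cross a a = 0 := by
  ext i
  fin_cases i <;> simp [cross, mul_comm]

theorem cross.neg_swap (a b : R3) : -cross a b = cross b a := by
  ext i
  fin_cases i <;> simp [cross] <;> ring

theorem cross.inner_left_eq_inner_right (a b c : R3) : ⟪a, cross b c⟫ = ⟪cross a b, c⟫ := by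
  simp only [inner_eq_coords, cross, e3_apply]
  simp only [Matrix.cons_val]
  ring

theorem cross.rotate_add_rotate (x y : ℝ) (a b c d : R3) :
    cross (x • a + y • b) (-y • c + x • d) + cross (x • c + y • d) (-y • a + x • b) =
      (x ^ 2 + y ^ 2) • (cross a d + cross c b) := by
  ext i
  fin_cases i <;> simp [cross] <;> ring

end VectorAlgebra

section LinearizedHSystem

open scoped RealInnerProductSpace

variable {E : Type*} [NormedAddCommGroup E] [NormedSpace ℝ E]

theorem dirDeriv_eq_re_smul_add_im_smul (u : ℂ → E) (z e : ℂ) :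
    dirDeriv e u z = e.re • ∂₁ u z + e.im • ∂₂ u z := by
  conv_lhs => rw [dirDeriv, ← Complex.re_add_im e, ← Complex.real_smul, ← mul_one (e.re : ℂ),
    ← Complex.real_smul]
  simp only [map_add, map_smul, dirDeriv]

theorem dirDeriv_inner {F : Type*} [NormedAddCommGroup F] [InnerProductSpace ℝ F] {u v : ℂ → F}
    (hu : Differentiable ℝ u) (hv : Differentiable ℝ v) (e : ℂ) :
    dirDeriv e (fun w => ⟪u w, v w⟫) =
      fun w => ⟪u w, dirDeriv e v w⟫ + ⟪dirDeriv e u w, v w⟫ :=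
  funext fun w => fderiv_inner_apply ℝ (hu w) (hv w) e

theorem dirDeriv_add {u v : ℂ → E} (hu : Differentiable ℝ u) (hv : Differentiable ℝ v) (e : ℂ) :
    dirDeriv e (fun w => u w + v w) = fun w => dirDeriv e u w + dirDeriv e v w :=
  funext fun w => by simp only [dirDeriv, fderiv_fun_add (hu w) (hv w), add_apply]

theorem dirDeriv_sub {u v : ℂ → E} (hu : Differentiable ℝ u) (hv : Differentiable ℝ v) (e : ℂ) :
    dirDeriv e (fun w => u w - v w) = fun w => dirDeriv e u w - dirDeriv e v w :=
  funext fun w => by simp only [dirDeriv, fderiv_fun_sub (hu w) (hv w), sub_apply]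

theorem dirDeriv_div_const {a : ℂ → ℝ} (ha : Differentiable ℝ a) (c : ℝ) (e : ℂ) :
    dirDeriv e (fun w => a w / c) = fun w => dirDeriv e a w / c := by
  funext w
  simp only [div_eq_mul_inv]
  exact (congrArg (· e) ((ha w).hasFDerivAt.mul_const c⁻¹).fderiv).trans (mul_comm _ _)

theorem hasFDerivAt_ofReal_comp {a : ℂ → ℝ} (ha : Differentiable ℝ a) (w : ℂ) :
    HasFDerivAt (fun w => (a w : ℂ)) (Complex.ofRealCLM ∘L fderiv ℝ a w) w :=
  Complex.ofRealCLM.hasFDerivAt.comp w (ha w).hasFDerivAt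

theorem dirDeriv_ofReal {a : ℂ → ℝ} (ha : Differentiable ℝ a) (e : ℂ) :
    dirDeriv e (fun w => (a w : ℂ)) = fun w => ((dirDeriv e a w : ℝ) : ℂ) :=
  funext fun w => congrArg (· e) (hasFDerivAt_ofReal_comp ha w).fderiv

theorem dirDeriv_ofReal_add_mul_I {a b : ℂ → ℝ} (ha : Differentiable ℝ a)
    (hb : Differentiable ℝ b) (e : ℂ) :
    dirDeriv e (fun w => (a w : ℂ) + b w * Complex.I) =
      fun w => ((dirDeriv e a w : ℝ) : ℂ) + (dirDeriv e b w : ℝ) * Complex.I := by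
  funext w
  rw [dirDeriv, ((hasFDerivAt_ofReal_comp ha w).fun_add
    ((hasFDerivAt_ofReal_comp hb w).mul_const Complex.I)).fderiv]
  simp [dirDeriv, mul_comm]

/-- The linearization at `ω` of the H-system `Δu = 2 u₁ ∧ u₂`, applied to `V`. -/
def linHSystem (ω V : ℂ → R3) (w : ℂ) : R3 :=
  ∂₁ (∂₁ V) w + ∂₂ (∂₂ V) w - (2 : ℝ) • cross (∂₁ ω w) (∂₂ V w) - (2 : ℝ) • cross (∂₁ V w) (∂₂ ω w)

theorem LW_eq_linHSystem (v : ℂ → R3) : LW v = linHSystem W v := rfl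

section ConformalChange

variable {φ φ' : ℂ → ℂ}

theorem dirDeriv_comp {u : ℂ → E} (hu : Differentiable ℝ u) (hφ : ∀ w, HasDerivAt φ (φ' w) w)
    (e w : ℂ) : dirDeriv e (fun w => u (φ w)) w = dirDeriv (φ' w * e) u (φ w) := by
  have hcomp := (hu (φ w)).hasFDerivAt.comp w ((hφ w).hasFDerivAt.restrictScalars ℝ)
  rw [dirDeriv, show (fun w => u (φ w)) = u ∘ φ from rfl, hcomp.fderiv]
  simp [dirDeriv, mul_comm]

theorem dirDeriv_dirDeriv_comp {φ'' : ℂ → ℂ} {u : ℂ → E} (hu : ContDiff ℝ 2 u)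
    (hφ : ∀ w, HasDerivAt φ (φ' w) w) (hφ' : ∀ w, HasDerivAt φ' (φ'' w) w) (e w : ℂ) :
    dirDeriv e (dirDeriv e fun w => u (φ w)) w =
      fderiv ℝ (fderiv ℝ u) (φ w) (φ' w * e) (φ' w * e) + fderiv ℝ u (φ w) (φ'' w * e * e) := by
  have hdu : Differentiable ℝ (fderiv ℝ u) :=
    (hu.fderiv_right (m := 1) (by norm_num)).differentiable one_ne_zero
  have hcoef := ((hφ' w).mul_const e).hasFDerivAt.restrictScalars ℝ
  have houter : HasFDerivAt (fun w => fderiv ℝ u (φ w)) _ w :=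
    (hdu (φ w)).hasFDerivAt.comp w ((hφ w).hasFDerivAt.restrictScalars ℝ)
  rw [funext (dirDeriv_comp (hu.differentiable two_ne_zero) hφ e), dirDeriv]
  simp only [dirDeriv]
  rw [(houter.clm_apply hcoef).fderiv]
  simp [mul_comm, add_comm]

theorem laplacian_comp {φ'' : ℂ → ℂ} {u : ℂ → E} (hu : ContDiff ℝ 2 u)
    (hφ : ∀ w, HasDerivAt φ (φ' w) w) (hφ' : ∀ w, HasDerivAt φ' (φ'' w) w) (w : ℂ) :
    ∂₁ (∂₁ fun w => u (φ w)) w + ∂₂ (∂₂ fun w => u (φ w)) w =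
      Complex.normSq (φ' w) • (∂₁ (∂₁ u) (φ w) + ∂₂ (∂₂ u) (φ w)) := by
  simp only [dirDeriv_dirDeriv_comp hu hφ hφ', dirDeriv_dirDeriv hu]
  generalize fderiv ℝ (fderiv ℝ u) (φ w) = A
  generalize fderiv ℝ u (φ w) = L
  have hdecomp (e : ℂ) : e = e.re • (1 : ℂ) + e.im • Complex.I := by
    simp [Complex.real_smul, Complex.re_add_im]
  rw [hdecomp (φ' w * 1), hdecomp (φ' w * Complex.I), mul_assoc _ Complex.I, Complex.I_mul_I]
  simp only [map_add, map_smul, add_apply, smul_apply, mul_one, mul_neg, map_neg,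
    Complex.mul_I_re, Complex.mul_I_im, Complex.normSq_apply]
  module

theorem linHSystem_comp {φ'' : ℂ → ℂ} {ω V : ℂ → R3} (hω : Differentiable ℝ ω)
    (hV : ContDiff ℝ 2 V) (hφ : ∀ w, HasDerivAt φ (φ' w) w)
    (hφ' : ∀ w, HasDerivAt φ' (φ'' w) w) (w : ℂ) :
    linHSystem (fun w => ω (φ w)) (fun w => V (φ w)) w =
      Complex.normSq (φ' w) • linHSystem ω V (φ w) := by
  have hcross := cross.rotate_add_rotate (φ' w).re (φ' w).im
    (∂₁ ω (φ w)) (∂₂ ω (φ w)) (∂₁ V (φ w)) (∂₂ V (φ w))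
  simp only [linHSystem, laplacian_comp hV hφ hφ', dirDeriv_comp hω hφ,
    dirDeriv_comp (hV.differentiable two_ne_zero) hφ,
    dirDeriv_eq_re_smul_add_im_smul _ _ (φ' w * Complex.I),
    dirDeriv_eq_re_smul_add_im_smul _ _ (φ' w), mul_one, Complex.mul_I_re, Complex.mul_I_im]
  rw [sub_sub, ← smul_add, hcross, Complex.normSq_apply]
  module

end ConformalChange

section HopfDifferential

variable {ω V : ℂ → R3}

/-- The linearization along `V`, at `ω`, of the Hopf differential `⟪∂̄u, ∂̄u⟫`. -/
def linHopf (ω V : ℂ → R3) (w : ℂ) : ℂ :=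
  ((⟪∂₁ ω w, ∂₁ V w⟫ - ⟪∂₂ ω w, ∂₂ V w⟫) / 2 : ℝ) +
    ((⟪∂₁ ω w, ∂₂ V w⟫ + ⟪∂₂ ω w, ∂₁ V w⟫) / 2 : ℝ) * Complex.I

theorem contDiff_linHopf (hω : ContDiff ℝ 2 ω) (hV : ContDiff ℝ 2 V) :
    ContDiff ℝ 1 (linHopf ω V) := by
  have hinner (e f : ℂ) : ContDiff ℝ 1 fun w => ⟪dirDeriv e ω w, dirDeriv f V w⟫ :=
    (contDiff_one_dirDeriv hω e).inner ℝ (contDiff_one_dirDeriv hV f)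
  exact (Complex.ofRealCLM.contDiff.comp (((hinner _ _).sub (hinner _ _)).div_const 2)).add
    ((Complex.ofRealCLM.contDiff.comp (((hinner _ _).add (hinner _ _)).div_const 2)).mul
      contDiff_const)

theorem dirDeriv_inner_dirDeriv (hω : ContDiff ℝ 2 ω) (hV : ContDiff ℝ 2 V) (d e f w : ℂ) :
    dirDeriv d (fun w => ⟪dirDeriv e ω w, dirDeriv f V w⟫) w =
      ⟪dirDeriv e ω w, dirDeriv d (dirDeriv f V) w⟫ +
        ⟪dirDeriv d (dirDeriv e ω) w, dirDeriv f V w⟫ :=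
  congrFun (dirDeriv_inner ((contDiff_one_dirDeriv hω e).differentiable one_ne_zero)
    ((contDiff_one_dirDeriv hV f).differentiable one_ne_zero) d) w

theorem inner_laplacian_of_linHSystem_eq_zero {w : ℂ} (hV : linHSystem ω V w = 0) (a : R3) :
    ⟪a, ∂₁ (∂₁ V) w⟫ + ⟪a, ∂₂ (∂₂ V) w⟫ =
      2 * ⟪cross a (∂₁ ω w), ∂₂ V w⟫ - 2 * ⟪cross a (∂₂ ω w), ∂₁ V w⟫ := by
  rw [linHSystem, sub_sub, sub_eq_zero] at hV
  rw [← inner_add_right, hV, inner_add_right, real_inner_smul_right, real_inner_smul_right,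
    ← cross.neg_swap (∂₂ ω w), inner_neg_right, cross.inner_left_eq_inner_right,
    cross.inner_left_eq_inner_right]
  ring

/-- The velocity of the deformation `V` tangent to `ω`, read in the frame `∂₁ ω, ∂₂ ω` as a complex
number. -/
def tangentCoord (ω V : ℂ → R3) (w : ℂ) : ℂ :=
  (⟪∂₁ ω w, V w⟫ : ℝ) + (⟪∂₂ ω w, V w⟫ : ℝ) * Complex.I

theorem tangentCoord_re (w : ℂ) : (tangentCoord ω V w).re = ⟪∂₁ ω w, V w⟫ := by
  simp [tangentCoord]

theorem tangentCoord_im (w : ℂ) : (tangentCoord ω V w).im = ⟪∂₂ ω w, V w⟫ := by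
  simp [tangentCoord]

theorem contDiff_tangentCoord (hω : ContDiff ℝ 2 ω) (hV : ContDiff ℝ 1 V) :
    ContDiff ℝ 1 (tangentCoord ω V) :=
  (Complex.ofRealCLM.contDiff.comp ((contDiff_one_dirDeriv hω 1).inner ℝ hV)).add
    ((Complex.ofRealCLM.contDiff.comp ((contDiff_one_dirDeriv hω Complex.I).inner ℝ hV)).mul
      contDiff_const)

theorem dbar_tangentCoord (hω : ContDiff ℝ 2 ω) (hV : Differentiable ℝ V) {c : ℝ} {w : ℂ}
    (hdiag : ∂₁ (∂₁ ω) w - ∂₂ (∂₂ ω) w = c • ∂₁ ω w)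
    (hmixed : (2 : ℝ) • ∂₂ (∂₁ ω) w = c • ∂₂ ω w) :
    ∂₁ (tangentCoord ω V) w + Complex.I * ∂₂ (tangentCoord ω V) w =
      c * tangentCoord ω V w + 2 * linHopf ω V w := by
  have hdω (e : ℂ) : Differentiable ℝ (dirDeriv e ω) :=
    (contDiff_one_dirDeriv hω e).differentiable one_ne_zero
  have hinner (e : ℂ) : Differentiable ℝ fun w => ⟪dirDeriv e ω w, V w⟫ := (hdω e).inner ℝ hV
  have hdiag' := congrArg (⟪·, V w⟫) hdiag
  have hmixed' := congrArg (⟪·, V w⟫) hmixed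
  simp only [inner_sub_left, real_inner_smul_left] at hdiag' hmixed'
  unfold tangentCoord linHopf
  simp only [dirDeriv_ofReal_add_mul_I (hinner 1) (hinner Complex.I), dirDeriv_inner (hdω _) hV,
    dirDeriv_comm hω 1 Complex.I]
  apply Complex.ext <;> simp <;> linarith

theorem cauchyRiemann_linHopf (hω : ContDiff ℝ 2 ω) (hV : ContDiff ℝ 2 V) {w : ℂ}
    (hHω : ∂₁ (∂₁ ω) w + ∂₂ (∂₂ ω) w = (2 : ℝ) • cross (∂₁ ω w) (∂₂ ω w))
    (hHV : linHSystem ω V w = 0) :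
    ∂₁ (linHopf ω V) w = Complex.I * ∂₂ (linHopf ω V) w := by
  have hinner (e f : ℂ) : Differentiable ℝ fun w => ⟪dirDeriv e ω w, dirDeriv f V w⟫ :=
    ((contDiff_one_dirDeriv hω e).differentiable one_ne_zero).inner ℝ
      ((contDiff_one_dirDeriv hV f).differentiable one_ne_zero)
  have hre := (hinner 1 1).fun_sub (hinner Complex.I Complex.I)
  have him := (hinner 1 Complex.I).fun_add (hinner Complex.I 1)
  have hre_half : Differentiable ℝ fun w => (⟪∂₁ ω w, ∂₁ V w⟫ - ⟪∂₂ ω w, ∂₂ V w⟫) / 2 := by fun_prop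
  have him_half : Differentiable ℝ fun w => (⟪∂₁ ω w, ∂₂ V w⟫ + ⟪∂₂ ω w, ∂₁ V w⟫) / 2 := by fun_prop
  have hΔ₁ := inner_laplacian_of_linHSystem_eq_zero hHV (∂₁ ω w)
  have hΔ₂ := inner_laplacian_of_linHSystem_eq_zero hHV (∂₂ ω w)
  rw [cross.self_eq_zero, inner_zero_left] at hΔ₁ hΔ₂
  rw [← cross.neg_swap, inner_neg_left] at hΔ₂
  have hω₁ := congrArg (⟪·, ∂₁ V w⟫) hHω
  have hω₂ := congrArg (⟪·, ∂₂ V w⟫) hHω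
  simp only [inner_add_left, real_inner_smul_left] at hω₁ hω₂
  unfold linHopf
  simp only [dirDeriv_ofReal_add_mul_I hre_half him_half,
    dirDeriv_div_const hre, dirDeriv_div_const him, dirDeriv_sub (hinner _ _) (hinner _ _),
    dirDeriv_add (hinner _ _) (hinner _ _), dirDeriv_inner_dirDeriv hω hV,
    dirDeriv_comm hω 1 Complex.I, dirDeriv_comm hV 1 Complex.I]
  apply Complex.ext <;> simp <;> linarith

theorem laplacian_inner_of_linHSystem_eq_zero (hω : ContDiff ℝ 2 ω) (hV : ContDiff ℝ 2 V) {w : ℂ}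
    (h₁ : cross (ω w) (∂₁ ω w) = -∂₂ ω w) (h₂ : cross (ω w) (∂₂ ω w) = ∂₁ ω w)
    (hHV : linHSystem ω V w = 0) :
    ∂₁ (∂₁ fun w => ⟪ω w, V w⟫) w + ∂₂ (∂₂ fun w => ⟪ω w, V w⟫) w =
      ⟪∂₁ (∂₁ ω) w + ∂₂ (∂₂ ω) w, V w⟫ := by
  have hω' := hω.differentiable two_ne_zero
  have hV' := hV.differentiable two_ne_zero
  have hdω (e : ℂ) : Differentiable ℝ (dirDeriv e ω) :=
    (contDiff_one_dirDeriv hω e).differentiable one_ne_zero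
  have hdV (e : ℂ) : Differentiable ℝ (dirDeriv e V) :=
    (contDiff_one_dirDeriv hV e).differentiable one_ne_zero
  have hΔ := inner_laplacian_of_linHSystem_eq_zero hHV (ω w)
  rw [h₁, h₂, inner_neg_left] at hΔ
  have hsecond (e : ℂ) : dirDeriv e (dirDeriv e fun w => ⟪ω w, V w⟫) w =
      ⟪ω w, dirDeriv e (dirDeriv e V) w⟫ + ⟪dirDeriv e (dirDeriv e ω) w, V w⟫ +
        2 * ⟪dirDeriv e ω w, dirDeriv e V w⟫ := by
    rw [dirDeriv_inner hω' hV', dirDeriv_add (hω'.inner ℝ (hdV e)) ((hdω e).inner ℝ hV'),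
      dirDeriv_inner hω' (hdV e), dirDeriv_inner (hdω e) hV']
    ring
  rw [hsecond, hsecond, inner_add_left]
  linear_combination hΔ

end HopfDifferential

end LinearizedHSystem

section PolarVectors

open scoped RealInnerProductSpace

/-- The vector of `ℝ³` with the given radial, azimuthal and vertical components at polar
angle `φ`. -/
def polarVec (φ ρ α h : ℝ) : R3 :=
  e3 (ρ * Real.cos φ - α * Real.sin φ) (ρ * Real.sin φ + α * Real.cos φ) h

variable {φ ρ α h ρ' α' h' : ℝ}

theorem exists_eq_polarVec (φ : ℝ) (v : R3) : ∃ ρ α h, v = polarVec φ ρ α h := by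
  refine ⟨v 0 * Real.cos φ + v 1 * Real.sin φ, v 1 * Real.cos φ - v 0 * Real.sin φ, v 2, ?_⟩
  have hφ := Real.cos_sq_add_sin_sq φ
  ext i
  fin_cases i <;> simp [polarVec]
  · linear_combination -v 0 * hφ
  · linear_combination -v 1 * hφ

theorem inner_polarVec :
    ⟪polarVec φ ρ α h, polarVec φ ρ' α' h'⟫ = ρ * ρ' + α * α' + h * h' := by
  simp only [inner_eq_coords, polarVec, e3_apply, Matrix.cons_val]
  linear_combination (ρ * ρ' + α * α') * Real.cos_sq_add_sin_sq φ

theorem cross_polarVec : cross (polarVec φ ρ α h) (polarVec φ ρ' α' h') =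
    polarVec φ (α * h' - h * α') (h * ρ' - ρ * h') (ρ * α' - α * ρ') := by
  ext i
  fin_cases i <;> simp [polarVec, cross]
  · ring
  · ring
  · linear_combination (ρ * α' - α * ρ') * Real.cos_sq_add_sin_sq φ

theorem polarVec_add : polarVec φ ρ α h + polarVec φ ρ' α' h' =
    polarVec φ (ρ + ρ') (α + α') (h + h') := by
  ext i
  fin_cases i <;> simp [polarVec] <;> ring

theorem polarVec_sub : polarVec φ ρ α h - polarVec φ ρ' α' h' =
    polarVec φ (ρ - ρ') (α - α') (h - h') := by
  ext i
  fin_cases i <;> simp [polarVec] <;> ring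

theorem smul_polarVec (c : ℝ) : c • polarVec φ ρ α h = polarVec φ (c * ρ) (c * α) (c * h) := by
  ext i
  fin_cases i <;> simp [polarVec] <;> ring

theorem hasDerivAt_e3 {a b c : ℝ → ℝ} {a' b' c' t : ℝ} (ha : HasDerivAt a a' t)
    (hb : HasDerivAt b b' t) (hc : HasDerivAt c c' t) :
    HasDerivAt (fun t => e3 (a t) (b t) (c t)) (e3 a' b' c') t := by
  have hpi : HasDerivAt (fun t => ![a t, b t, c t]) ![a', b', c'] t :=
    hasDerivAt_pi.mpr fun i => by fin_cases i <;> assumption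
  exact (PiLp.continuousLinearEquiv 2 ℝ fun _ : Fin 3 => ℝ).symm.hasFDerivAt.comp_hasDerivAt t hpi

end PolarVectors

section EquivariantFields

variable {u : ℂ → R3} {ρ α h ρ' α' h' : ℝ → ℝ}

theorem dirDeriv_one_eq_polarVec (hu : Differentiable ℝ u)
    (heq : ∀ w, u w = polarVec (2 * w.im) (ρ w.re) (α w.re) (h w.re))
    (hρ : ∀ t, HasDerivAt ρ (ρ' t) t) (hα : ∀ t, HasDerivAt α (α' t) t)
    (hh : ∀ t, HasDerivAt h (h' t) t) (w : ℂ) :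
    ∂₁ u w = polarVec (2 * w.im) (ρ' w.re) (α' w.re) (h' w.re) := by
  have hline := hasDerivAt_horizontal hu w.re w.im
  rw [Complex.re_add_im] at hline
  refine hline.unique ?_
  simp only [heq, Complex.add_re, Complex.add_im, Complex.ofReal_re, Complex.ofReal_im,
    Complex.re_ofReal_mul, Complex.im_ofReal_mul, Complex.I_re, Complex.I_im, mul_zero, mul_one,
    add_zero, zero_add]
  exact hasDerivAt_e3 (((hρ _).mul_const _).sub ((hα _).mul_const _))
    (((hρ _).mul_const _).add ((hα _).mul_const _)) (hh _)

theorem dirDeriv_I_eq_polarVec (hu : Differentiable ℝ u)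
    (heq : ∀ w, u w = polarVec (2 * w.im) (ρ w.re) (α w.re) (h w.re)) (w : ℂ) :
    ∂₂ u w = polarVec (2 * w.im) (-2 * α w.re) (2 * ρ w.re) 0 := by
  have hline := hasDerivAt_vertical hu w.re w.im
  rw [Complex.re_add_im] at hline
  refine hline.unique ?_
  simp only [heq, Complex.add_re, Complex.add_im, Complex.ofReal_re, Complex.ofReal_im,
    Complex.re_ofReal_mul, Complex.im_ofReal_mul, Complex.I_re, Complex.I_im, mul_zero, mul_one,
    add_zero, zero_add]
  have hangle : HasDerivAt (fun θ : ℝ => 2 * θ) 2 w.im := by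
    simpa using (hasDerivAt_id w.im).const_mul 2
  refine (hasDerivAt_e3 ((hangle.cos.const_mul _).sub (hangle.sin.const_mul _))
    ((hangle.sin.const_mul _).add (hangle.cos.const_mul _))
    (hasDerivAt_const _ (h w.re))).congr_deriv ?_
  ext i
  fin_cases i <;> simp [polarVec] <;> ring

end EquivariantFields

section Bubble

open scoped RealInnerProductSpace

theorem sq_re_sq_add_im_sq_add_one_ne_zero (z : ℂ) : (z.re ^ 2 + z.im ^ 2) ^ 2 + 1 ≠ 0 := by
  positivity

theorem contDiff_W {n : WithTop ℕ∞} : ContDiff ℝ n W := by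
  have hre : ContDiff ℝ n Complex.re := Complex.reCLM.contDiff
  have him : ContDiff ℝ n Complex.im := Complex.imCLM.contDiff
  refine contDiff_euclidean.mpr fun i => ?_
  fin_cases i <;> simp only [W, e3_apply] <;>
    exact ContDiff.div (by fun_prop) (by fun_prop) sq_re_sq_add_im_sq_add_one_ne_zero

/-- The bubble `W` in the logarithmic polar coordinate `w`, where `z = exp w`. -/
def cylBubble (w : ℂ) : R3 := W (Complex.exp w)

theorem contDiff_cylBubble {n : WithTop ℕ∞} : ContDiff ℝ n cylBubble :=
  contDiff_W.comp Complex.contDiff_exp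

theorem cylBubble_periodic : Function.Periodic cylBubble (2 * Real.pi * Complex.I) := fun w => by
  rw [cylBubble, Complex.exp_periodic, cylBubble]

theorem cylBubble_eq (w : ℂ) :
    cylBubble w = polarVec (2 * w.im) (sech₂ w.re) 0 (tanh₂ w.re) := by
  have hpyth := Real.cos_sq_add_sin_sq w.im
  have hnorm : (Real.exp w.re * Real.cos w.im) ^ 2 + (Real.exp w.re * Real.sin w.im) ^ 2 =
      Real.exp w.re ^ 2 := by linear_combination Real.exp w.re ^ 2 * hpyth
  have hexp : Real.exp (2 * w.re) = Real.exp w.re ^ 2 := by rw [← Real.exp_nat_mul]; norm_cast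
  ext i
  fin_cases i <;>
    simp [cylBubble, W, polarVec, Complex.exp_re, Complex.exp_im, hnorm, sech₂, tanh₂,
      Real.tanh_eq_sinh_div_cosh, Real.cosh_eq, Real.sinh_eq, Real.exp_neg, hexp,
      Real.cos_two_mul', Real.sin_two_mul] <;>
    field_simp
  ring

theorem dirDeriv_cylBubble (e w : ℂ) :
    dirDeriv e cylBubble w = dirDeriv (Complex.exp w * e) W (Complex.exp w) :=
  dirDeriv_comp (contDiff_W.differentiable one_ne_zero) Complex.hasDerivAt_exp e w

theorem dirDeriv_one_cylBubble (w : ℂ) : ∂₁ cylBubble w =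
    polarVec (2 * w.im) (-2 * sech₂ w.re * tanh₂ w.re) 0 (2 * sech₂ w.re ^ 2) :=
  dirDeriv_one_eq_polarVec (contDiff_cylBubble.differentiable one_ne_zero) cylBubble_eq
    hasDerivAt_sech₂ (fun t => hasDerivAt_const t 0) hasDerivAt_tanh₂ w

theorem dirDeriv_I_cylBubble (w : ℂ) :
    ∂₂ cylBubble w = polarVec (2 * w.im) 0 (2 * sech₂ w.re) 0 := by
  simpa using dirDeriv_I_eq_polarVec (contDiff_cylBubble.differentiable one_ne_zero)
    (α := fun _ => 0) cylBubble_eq w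

theorem differentiable_dirDeriv_cylBubble (e : ℂ) : Differentiable ℝ (dirDeriv e cylBubble) :=
  (contDiff_one_dirDeriv contDiff_cylBubble e).differentiable one_ne_zero

theorem dirDeriv_one_one_cylBubble (w : ℂ) : ∂₁ (∂₁ cylBubble) w =
    polarVec (2 * w.im) (4 * sech₂ w.re * tanh₂ w.re ^ 2 - 4 * sech₂ w.re ^ 3) 0
      (-8 * sech₂ w.re ^ 2 * tanh₂ w.re) := by
  rw [dirDeriv_one_eq_polarVec (differentiable_dirDeriv_cylBubble 1) dirDeriv_one_cylBubble
    (fun t => ((hasDerivAt_sech₂ t).const_mul (-2)).mul (hasDerivAt_tanh₂ t))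
    (fun t => hasDerivAt_const t 0) (fun t => ((hasDerivAt_sech₂ t).pow 2).const_mul 2) w]
  congr 1 <;> push_cast <;> ring

theorem dirDeriv_I_one_cylBubble (w : ℂ) : ∂₂ (∂₁ cylBubble) w =
    polarVec (2 * w.im) 0 (-4 * sech₂ w.re * tanh₂ w.re) 0 := by
  rw [dirDeriv_I_eq_polarVec (ρ := fun t => -2 * sech₂ t * tanh₂ t) (α := fun _ => 0)
    (h := fun t => 2 * sech₂ t ^ 2) (differentiable_dirDeriv_cylBubble 1) dirDeriv_one_cylBubble w]
  congr 1 <;> ring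

theorem dirDeriv_I_I_cylBubble (w : ℂ) : ∂₂ (∂₂ cylBubble) w =
    polarVec (2 * w.im) (-4 * sech₂ w.re) 0 0 := by
  rw [dirDeriv_I_eq_polarVec (ρ := fun _ => 0) (α := fun t => 2 * sech₂ t) (h := fun _ => 0)
    (differentiable_dirDeriv_cylBubble Complex.I) dirDeriv_I_cylBubble w]
  congr 1 <;> ring

theorem cross_cylBubble_dirDeriv_one (w : ℂ) :
    cross (cylBubble w) (∂₁ cylBubble w) = -∂₂ cylBubble w := by
  rw [← neg_one_smul ℝ, dirDeriv_one_cylBubble, dirDeriv_I_cylBubble, cylBubble_eq, cross_polarVec,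
    smul_polarVec]
  congr 1
  · ring
  · linear_combination -2 * sech₂ w.re * sech₂_sq_add_tanh₂_sq w.re
  · ring

theorem cross_cylBubble_dirDeriv_I (w : ℂ) :
    cross (cylBubble w) (∂₂ cylBubble w) = ∂₁ cylBubble w := by
  rw [dirDeriv_one_cylBubble, dirDeriv_I_cylBubble, cylBubble_eq, cross_polarVec]
  congr 1 <;> ring

theorem laplacian_cylBubble (w : ℂ) :
    ∂₁ (∂₁ cylBubble) w + ∂₂ (∂₂ cylBubble) w = (-8 * sech₂ w.re ^ 2) • cylBubble w := by
  rw [dirDeriv_one_one_cylBubble, dirDeriv_I_I_cylBubble, cylBubble_eq, polarVec_add, smul_polarVec]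
  congr 1
  · linear_combination 4 * sech₂ w.re * sech₂_sq_add_tanh₂_sq w.re
  · ring
  · ring

theorem hSystem_cylBubble (w : ℂ) : ∂₁ (∂₁ cylBubble) w + ∂₂ (∂₂ cylBubble) w =
    (2 : ℝ) • cross (∂₁ cylBubble w) (∂₂ cylBubble w) := by
  rw [laplacian_cylBubble, dirDeriv_one_cylBubble, dirDeriv_I_cylBubble, cylBubble_eq,
    cross_polarVec, smul_polarVec, smul_polarVec]
  congr 1 <;> ring

theorem dirDeriv_one_one_sub_I_I_cylBubble (w : ℂ) :
    ∂₁ (∂₁ cylBubble) w - ∂₂ (∂₂ cylBubble) w = (-4 * tanh₂ w.re) • ∂₁ cylBubble w := by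
  rw [dirDeriv_one_one_cylBubble, dirDeriv_I_I_cylBubble, dirDeriv_one_cylBubble, polarVec_sub,
    smul_polarVec]
  congr 1
  · linear_combination -4 * sech₂ w.re * sech₂_sq_add_tanh₂_sq w.re
  · ring
  · ring

theorem two_smul_dirDeriv_I_one_cylBubble (w : ℂ) :
    (2 : ℝ) • ∂₂ (∂₁ cylBubble) w = (-4 * tanh₂ w.re) • ∂₂ cylBubble w := by
  rw [dirDeriv_I_one_cylBubble, dirDeriv_I_cylBubble, smul_polarVec, smul_polarVec]
  congr 1 <;> ring

theorem norm_cylBubble (w : ℂ) : ‖cylBubble w‖ = 1 := by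
  rw [← sq_eq_sq₀ (norm_nonneg _) zero_le_one, ← real_inner_self_eq_norm_sq, cylBubble_eq,
    inner_polarVec]
  linear_combination sech₂_sq_add_tanh₂_sq w.re

theorem norm_dirDeriv_one_cylBubble (w : ℂ) : ‖∂₁ cylBubble w‖ = 2 * sech₂ w.re := by
  rw [← sq_eq_sq₀ (norm_nonneg _) (by linarith [sech₂_pos w.re]), ← real_inner_self_eq_norm_sq,
    dirDeriv_one_cylBubble, inner_polarVec]
  linear_combination 4 * sech₂ w.re ^ 2 * sech₂_sq_add_tanh₂_sq w.re

theorem norm_dirDeriv_I_cylBubble (w : ℂ) : ‖∂₂ cylBubble w‖ = 2 * sech₂ w.re := by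
  rw [← sq_eq_sq₀ (norm_nonneg _) (by linarith [sech₂_pos w.re]), ← real_inner_self_eq_norm_sq,
    dirDeriv_I_cylBubble, inner_polarVec]
  ring

theorem inner_dirDeriv_one_dirDeriv_I_cylBubble (w : ℂ) :
    ⟪∂₁ cylBubble w, ∂₂ cylBubble w⟫ = 0 := by
  rw [dirDeriv_one_cylBubble, dirDeriv_I_cylBubble, inner_polarVec]
  ring

theorem inner_cylBubble_dirDeriv (e w : ℂ) : ⟪cylBubble w, dirDeriv e cylBubble w⟫ = 0 := by
  rw [dirDeriv_eq_re_smul_add_im_smul, dirDeriv_one_cylBubble, dirDeriv_I_cylBubble, cylBubble_eq,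
    smul_polarVec, smul_polarVec, polarVec_add, inner_polarVec]
  ring

theorem norm_dirDeriv_cylBubble (e w : ℂ) : ‖dirDeriv e cylBubble w‖ = 2 * sech₂ w.re * ‖e‖ := by
  have hS := sech₂_pos w.re
  rw [← sq_eq_sq₀ (norm_nonneg _) (by positivity), dirDeriv_eq_re_smul_add_im_smul,
    norm_add_sq_real, norm_smul, norm_smul, norm_dirDeriv_one_cylBubble,
    norm_dirDeriv_I_cylBubble, real_inner_smul_left, real_inner_smul_right,
    inner_dirDeriv_one_dirDeriv_I_cylBubble, mul_pow _ ‖e‖, Complex.sq_norm, Complex.normSq_apply]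
  simp only [mul_pow, Real.norm_eq_abs, sq_abs]
  ring

theorem eq_smul_cylBubble_add_dirDeriv (V : ℂ → R3) (w : ℂ) :
    V w = ⟪cylBubble w, V w⟫ • cylBubble w +
      dirDeriv (tangentCoord cylBubble V w / (4 * sech₂ w.re ^ 2 : ℝ)) cylBubble w := by
  obtain ⟨ρ, α, h, hV⟩ := exists_eq_polarVec (2 * w.im) (V w)
  have hS := (sech₂_pos w.re).ne'
  have hST := sech₂_sq_add_tanh₂_sq w.re
  rw [dirDeriv_eq_re_smul_add_im_smul, Complex.div_ofReal_re, Complex.div_ofReal_im,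
    tangentCoord_re, tangentCoord_im]
  rw [hV, dirDeriv_one_cylBubble, dirDeriv_I_cylBubble, cylBubble_eq]
  simp only [inner_polarVec, smul_polarVec, polarVec_add]
  congr 1
  · field_simp
    linear_combination -4 * ρ * sech₂ w.re ^ 2 * hST
  · field_simp
    ring
  · field_simp
    linear_combination -4 * h * sech₂ w.re ^ 2 * hST

end Bubble

section CylinderClassification

open scoped RealInnerProductSpace

variable {V : ℂ → R3} {C : ℝ}

theorem exists_inner_cylBubble_eq (hV : ContDiff ℝ 2 V)
    (hper : Function.Periodic V (2 * Real.pi * Complex.I)) (hC : ∀ w, ‖V w‖ ≤ C)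
    (hL : ∀ w, linHSystem cylBubble V w = 0) :
    ∃ q : R3, ∀ w, ⟪cylBubble w, V w⟫ = ⟪q, cylBubble w⟫ := by
  have hinner : ContDiff ℝ 2 fun w => ⟪cylBubble w, V w⟫ := contDiff_cylBubble.inner ℝ hV
  have hd (e : ℂ) := (contDiff_one_dirDeriv hinner e).differentiable one_ne_zero
  obtain ⟨a, b, c, hf⟩ := exists_eq_of_jacobi (B := C)
    (f := fun w => ((⟪cylBubble w, V w⟫ : ℝ) : ℂ))
    (Complex.ofRealCLM.contDiff.comp hinner)
    (fun w => by simp only [cylBubble_periodic w, hper w])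
    (fun w => by
      rw [Complex.norm_real]
      refine (abs_real_inner_le_norm _ _).trans ?_
      simpa only [norm_cylBubble, one_mul] using hC w)
    (fun w => by
      have hΔ := laplacian_inner_of_linHSystem_eq_zero contDiff_cylBubble hV
        (cross_cylBubble_dirDeriv_one w) (cross_cylBubble_dirDeriv_I w) (hL w)
      rw [laplacian_cylBubble, real_inner_smul_left] at hΔ
      simp only [dirDeriv_ofReal (hinner.differentiable two_ne_zero), dirDeriv_ofReal (hd _)]
      exact_mod_cast hΔ)
  refine ⟨e3 (b.re + c.re) (c.im - b.im) a.re, fun w => ?_⟩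
  have hre := congrArg Complex.re (hf w.re w.im)
  rw [Complex.re_add_im, Complex.ofReal_re] at hre
  rw [hre, cylBubble_eq]
  simp [inner_eq_coords, polarVec, Complex.exp_re, Complex.exp_im]
  ring

theorem norm_tangentCoord_cylBubble_le (hC : ∀ w, ‖V w‖ ≤ C) (w : ℂ) :
    ‖tangentCoord cylBubble V w‖ ≤ 4 * C * sech₂ w.re := by
  have hbound {a : R3} (ha : ‖a‖ = 2 * sech₂ w.re) : |⟪a, V w⟫| ≤ 2 * sech₂ w.re * C :=
    (abs_real_inner_le_norm _ _).trans
      (ha ▸ mul_le_mul_of_nonneg_left (hC w) (norm_nonneg a))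
  refine (Complex.norm_le_abs_re_add_abs_im _).trans ?_
  rw [tangentCoord_re, tangentCoord_im]
  linarith [hbound (norm_dirDeriv_one_cylBubble w), hbound (norm_dirDeriv_I_cylBubble w)]

theorem exists_tangentCoord_cylBubble_eq (hV : ContDiff ℝ 2 V)
    (hper : Function.Periodic V (2 * Real.pi * Complex.I)) (hC : ∀ w, ‖V w‖ ≤ C)
    (hL : ∀ w, linHSystem cylBubble V w = 0) :
    ∃ c : ℤ → ℂ, ∀ w, tangentCoord cylBubble V w =
      (sech₂ w.re : ℂ) ^ 2 * ∑ k ∈ Finset.Icc (-2) 2, c k * Complex.exp (k * w) := by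
  obtain ⟨c, hc⟩ := exists_eq_of_dbar (H := tangentCoord cylBubble V) (K := linHopf cylBubble V)
    (contDiff_tangentCoord contDiff_cylBubble (hV.of_le one_le_two))
    (contDiff_linHopf contDiff_cylBubble hV)
    (fun w => by simp only [tangentCoord, dirDeriv_periodic cylBubble_periodic _ w, hper w])
    (fun w => by simp only [linHopf, dirDeriv_periodic cylBubble_periodic _ w,
      dirDeriv_periodic hper _ w])
    (fun w => by
      simpa using dbar_tangentCoord contDiff_cylBubble (hV.differentiable two_ne_zero)
        (dirDeriv_one_one_sub_I_I_cylBubble w) (two_smul_dirDeriv_I_one_cylBubble w))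
    (fun w => cauchyRiemann_linHopf contDiff_cylBubble hV (hSystem_cylBubble w) (hL w))
    (norm_tangentCoord_cylBubble_le hC)
  exact ⟨c, fun w => by simpa only [Complex.re_add_im] using hc w.re w.im⟩

end CylinderClassification

section KernelFields

open scoped RealInnerProductSpace

/-- The vector field `z ↦ DW(z)[Q(z) / z] + ⟨q, W(z)⟩ W(z)`, where `Q` is the complex polynomial
of degree at most `4` with coefficients `m`: the general bounded solution of the linearized
H-system at `W`. It has this meaning only at `z ≠ 0`. -/
def kernelField (m : Fin 5 → ℂ) (q : R3) (z : ℂ) : R3 :=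
  dirDeriv ((∑ j, m j * z ^ (j : ℕ)) / z) W z + ⟪q, W z⟫ • W z

theorem sum_Icc_mul_zpow_eq (c : ℤ → ℂ) {z : ℂ} (hz : z ≠ 0) :
    ∑ k ∈ Finset.Icc (-2) 2, c k * z ^ k = (∑ j : Fin 5, c (j - 2) * z ^ (j : ℕ)) / z ^ 2 := by
  have hIcc : Finset.Icc (-2 : ℤ) 2 = Finset.univ.image fun j : Fin 5 => (j : ℤ) - 2 := by decide
  rw [hIcc, Finset.sum_image fun i _ j _ hij => by simpa [Fin.ext_iff] using hij, Finset.sum_div]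
  refine Finset.sum_congr rfl fun j _ => ?_
  rw [zpow_sub₀ hz, zpow_natCast, zpow_ofNat, mul_div_assoc]

theorem exists_eq_kernelField {v : ℂ → R3} (hv : ContDiff ℝ 2 v) {C : ℝ} (hC : ∀ z, ‖v z‖ ≤ C)
    (hL : ∀ z, LW v z = 0) : ∃ m q, ∀ z ≠ 0, v z = kernelField m q z := by
  have hV : ContDiff ℝ 2 fun w => v (Complex.exp w) := hv.comp Complex.contDiff_exp
  have hper : Function.Periodic (fun w => v (Complex.exp w)) (2 * Real.pi * Complex.I) := fun w =>
    congrArg v (Complex.exp_periodic w)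
  have hLV (w : ℂ) : linHSystem cylBubble (fun w => v (Complex.exp w)) w = 0 := by
    have hcomp := linHSystem_comp (contDiff_W.differentiable one_ne_zero) hv Complex.hasDerivAt_exp
      Complex.hasDerivAt_exp w
    rwa [← LW_eq_linHSystem, hL, smul_zero] at hcomp
  obtain ⟨q, hq⟩ := exists_inner_cylBubble_eq hV hper (fun w => hC _) hLV
  obtain ⟨c, hc⟩ := exists_tangentCoord_cylBubble_eq hV hper (fun w => hC _) hLV
  refine ⟨fun j => c (j - 2) / 4, q, fun z hz => ?_⟩
  obtain ⟨w, rfl⟩ : ∃ w, Complex.exp w = z := ⟨Complex.log z, Complex.exp_log hz⟩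
  have hS := ofReal_sech₂_ne_zero w.re
  rw [eq_smul_cylBubble_add_dirDeriv (fun w => v (Complex.exp w)) w, hq, hc, dirDeriv_cylBubble,
    kernelField, add_comm]
  congr 2
  simp only [Complex.exp_int_mul, sum_Icc_mul_zpow_eq c hz, div_mul_eq_mul_div, ← Finset.sum_div]
  push_cast
  field_simp

end KernelFields

section KernelBasis

theorem continuous_kernelBasis (i : Fin 13) : Continuous (kernelBasis i) := by
  have hden := sq_re_sq_add_im_sq_add_one_ne_zero
  have hden_sq (z : ℂ) := pow_ne_zero 2 (hden z)
  refine (contDiff_euclidean (n := 0) (𝕜 := ℝ).mpr fun j => contDiff_zero.mpr ?_).continuous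
  fin_cases i <;> fin_cases j <;> first
    | exact continuous_const
    | exact Continuous.div (by fun_prop) (by fun_prop) hden
    | exact Continuous.div (by fun_prop) (by fun_prop) hden_sq

theorem W_add_mul_I (s t : ℝ) : W (s + t * Complex.I) =
    e3 (2 * (s ^ 2 - t ^ 2) / ((s ^ 2 + t ^ 2) ^ 2 + 1)) (4 * s * t / ((s ^ 2 + t ^ 2) ^ 2 + 1))
      (((s ^ 2 + t ^ 2) ^ 2 - 1) / ((s ^ 2 + t ^ 2) ^ 2 + 1)) := by
  simp [W]

theorem dirDeriv_one_W (z : ℂ) : ∂₁ W z = -Z11 z := by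
  have hden := sq_re_sq_add_im_sq_add_one_ne_zero z
  have hline := hasDerivAt_horizontal (contDiff_W.differentiable one_ne_zero) z.re z.im
  simp only [W_add_mul_I, Complex.re_add_im] at hline
  have hN : HasDerivAt (fun s : ℝ => (s ^ 2 + z.im ^ 2) ^ 2)
      (4 * z.re * (z.re ^ 2 + z.im ^ 2)) z.re := by
    refine (((hasDerivAt_pow 2 z.re).add_const (z.im ^ 2)).fun_pow 2).congr_deriv ?_
    push_cast
    ring
  have hD := hN.add_const 1
  refine hline.unique ((hasDerivAt_e3
    ((((hasDerivAt_pow 2 z.re).sub_const (z.im ^ 2)).const_mul 2).fun_div hD hden)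
    ((((hasDerivAt_id' z.re).const_mul 4).mul_const z.im).fun_div hD hden)
    ((hN.sub_const 1).fun_div hD hden)).congr_deriv ?_)
  ext i
  fin_cases i <;> simp [Z11] <;> field_simp <;> ring

theorem dirDeriv_I_W (z : ℂ) : ∂₂ W z = -Z12 z := by
  have hden := sq_re_sq_add_im_sq_add_one_ne_zero z
  have hline := hasDerivAt_vertical (contDiff_W.differentiable one_ne_zero) z.re z.im
  simp only [W_add_mul_I, Complex.re_add_im] at hline
  have hN : HasDerivAt (fun s : ℝ => (z.re ^ 2 + s ^ 2) ^ 2)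
      (4 * z.im * (z.re ^ 2 + z.im ^ 2)) z.im := by
    refine (((hasDerivAt_pow 2 z.im).const_add (z.re ^ 2)).fun_pow 2).congr_deriv ?_
    push_cast
    ring
  have hD := hN.add_const 1
  refine hline.unique ((hasDerivAt_e3
    ((((hasDerivAt_pow 2 z.im).const_sub (z.re ^ 2)).const_mul 2).fun_div hD hden)
    (((hasDerivAt_id' z.im).const_mul (4 * z.re)).fun_div hD hden)
    ((hN.sub_const 1).fun_div hD hden)).congr_deriv ?_)
  ext i
  fin_cases i <;> simp [Z12] <;> field_simp <;> ring

theorem dirDeriv_W (e z : ℂ) : dirDeriv e W z = -(e.re • Z11 z + e.im • Z12 z) := by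
  rw [dirDeriv_eq_re_smul_add_im_smul, dirDeriv_one_W, dirDeriv_I_W]
  module

theorem Z01_eq_dirDeriv (z : ℂ) : Z01 z = dirDeriv (-z) W z := by
  have hden := sq_re_sq_add_im_sq_add_one_ne_zero z
  rw [dirDeriv_W]
  ext i
  fin_cases i <;> simp [Z01, Z11, Z12] <;> field_simp <;> ring

theorem Z02_eq_dirDeriv (z : ℂ) : Z02 z = dirDeriv (Complex.I * z / 2) W z := by
  have hden := sq_re_sq_add_im_sq_add_one_ne_zero z
  rw [dirDeriv_W]
  ext i
  fin_cases i <;> simp [Z02, Z11, Z12] <;> field_simp <;> ring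

theorem Z11_eq_dirDeriv (z : ℂ) : Z11 z = dirDeriv (-1) W z := by
  simp [dirDeriv_W]

theorem Z12_eq_dirDeriv (z : ℂ) : Z12 z = dirDeriv (-Complex.I) W z := by
  simp [dirDeriv_W]

theorem Zm11_eq_dirDeriv (z : ℂ) : Zm11 z = dirDeriv (z ^ 2) W z := by
  have hden := sq_re_sq_add_im_sq_add_one_ne_zero z
  rw [dirDeriv_W, sq, Complex.mul_re, Complex.mul_im]
  ext i
  fin_cases i <;> simp [Zm11, Z11, Z12] <;> field_simp <;> ring

theorem Zm12_eq_dirDeriv (z : ℂ) : Zm12 z = dirDeriv (-Complex.I * z ^ 2) W z := by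
  have hden := sq_re_sq_add_im_sq_add_one_ne_zero z
  rw [dirDeriv_W, sq]
  ext i
  fin_cases i <;> simp [Zm12, Z11, Z12] <;> field_simp <;> ring

theorem re_sq_add_im_sq_ne_zero {z : ℂ} (hz : z ≠ 0) : z.re ^ 2 + z.im ^ 2 ≠ 0 := by
  simpa [Complex.normSq_apply, sq] using Complex.normSq_pos.mpr hz |>.ne'

theorem Z21_eq_dirDeriv {z : ℂ} (hz : z ≠ 0) : Z21 z = dirDeriv (z⁻¹ / 2) W z := by
  have hden := sq_re_sq_add_im_sq_add_one_ne_zero z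
  have hnorm := re_sq_add_im_sq_ne_zero hz
  rw [dirDeriv_W]
  ext i
  fin_cases i <;> simp [Z21, Z11, Z12, Complex.normSq_apply] <;> field_simp <;> ring

theorem Z22_eq_dirDeriv {z : ℂ} (hz : z ≠ 0) : Z22 z = dirDeriv (Complex.I * z⁻¹ / 2) W z := by
  have hden := sq_re_sq_add_im_sq_add_one_ne_zero z
  have hnorm := re_sq_add_im_sq_ne_zero hz
  rw [dirDeriv_W]
  ext i
  fin_cases i <;> simp [Z22, Z11, Z12, Complex.normSq_apply] <;> field_simp <;> ring

theorem Zm21_eq_dirDeriv {z : ℂ} (hz : z ≠ 0) :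
    Zm21 z = dirDeriv (Complex.I * (z⁻¹ - z ^ 3) / 4) W z := by
  have hden := sq_re_sq_add_im_sq_add_one_ne_zero z
  have hnorm := re_sq_add_im_sq_ne_zero hz
  rw [dirDeriv_W, pow_three]
  ext i
  fin_cases i <;> simp [Zm21, Z11, Z12, Complex.normSq_apply] <;> field_simp <;> ring

theorem Zm22_eq_dirDeriv {z : ℂ} (hz : z ≠ 0) :
    Zm22 z = dirDeriv ((z ^ 3 + z⁻¹) / 4) W z := by
  have hden := sq_re_sq_add_im_sq_add_one_ne_zero z
  have hnorm := re_sq_add_im_sq_ne_zero hz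
  rw [dirDeriv_W, pow_three]
  ext i
  fin_cases i <;> simp [Zm22, Z11, Z12, Complex.normSq_apply] <;> field_simp <;> ring

theorem K1_eq_smul_W (z : ℂ) : K1 z = W z 2 • W z := by
  have hden := sq_re_sq_add_im_sq_add_one_ne_zero z
  ext i
  fin_cases i <;> simp [K1, W] <;> field_simp

theorem K2_eq_smul_W (z : ℂ) : K2 z = (W z 0 / 2) • W z := by
  have hden := sq_re_sq_add_im_sq_add_one_ne_zero z
  ext i
  fin_cases i <;> simp [K2, W] <;> field_simp

theorem K3_eq_smul_W (z : ℂ) : K3 z = (W z 1 / 2) • W z := by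
  have hden := sq_re_sq_add_im_sq_add_one_ne_zero z
  ext i
  fin_cases i <;> simp [K3, W] <;> field_simp <;> ring

end KernelBasis

section Classification

open scoped RealInnerProductSpace

/-- The coefficients `m` of the polynomial for which `kernelField m q` is the combination of the
`Z_{k,j}` with coefficients `c`; they are read off from the directions of differentiation in
`Z01_eq_dirDeriv`, …, `Zm22_eq_dirDeriv`. -/
def modeCoeff (c : Fin 13 → ℝ) : Fin 5 → ℂ :=
  ![(c 4 + Complex.I * c 5) / 2 + (c 9 + Complex.I * c 8) / 4,
    -(c 2 + Complex.I * c 3),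
    -c 0 + Complex.I * c 1 / 2,
    c 6 - Complex.I * c 7,
    (c 9 - Complex.I * c 8) / 4]

/-- The vector `q` for which `⟨q, W⟩ W` is the combination of `K₁, K₂, K₃` with coefficients
`c`. -/
def normalCoeff (c : Fin 13 → ℝ) : R3 := e3 (c 11 / 2) (c 12 / 2) (c 10)

theorem sum_smul_kernelBasis (c : Fin 13 → ℝ) {z : ℂ} (hz : z ≠ 0) :
    ∑ i, c i • kernelBasis i z = kernelField (modeCoeff c) (normalCoeff c) z := by
  have hdirection : (∑ j, modeCoeff c j * z ^ (j : ℕ)) / z =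
      c 0 • -z + c 1 • (Complex.I * z / 2) + c 2 • (-1) + c 3 • -Complex.I + c 4 • (z⁻¹ / 2) +
        c 5 • (Complex.I * z⁻¹ / 2) + c 6 • z ^ 2 + c 7 • (-Complex.I * z ^ 2) +
        c 8 • (Complex.I * (z⁻¹ - z ^ 3) / 4) + c 9 • ((z ^ 3 + z⁻¹) / 4) := by
    simp only [modeCoeff, Fin.sum_univ_five, Fin.coe_ofNat_eq_mod, Nat.reduceMod, Matrix.cons_val,
      Complex.real_smul]
    field_simp
    ring
  have hnormal : ⟪normalCoeff c, W z⟫ = c 10 * W z 2 + c 11 * (W z 0 / 2) + c 12 * (W z 1 / 2) := by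
    simp only [normalCoeff, inner_eq_coords, e3_apply, Matrix.cons_val]
    ring
  rw [kernelField, hdirection, hnormal]
  simp only [dirDeriv, map_add, map_smul]
  simp only [Fin.sum_univ_succ, Finset.univ_unique, Finset.sum_singleton, Fin.default_eq_zero,
    Fin.succ_zero_eq_one, Fin.succ_one_eq_two, Fin.reduceSucc, kernelBasis,
    Matrix.cons_val_zero, Matrix.cons_val_succ, Z01_eq_dirDeriv, Z02_eq_dirDeriv,
    Z11_eq_dirDeriv, Z12_eq_dirDeriv, Z21_eq_dirDeriv hz, Z22_eq_dirDeriv hz, Zm11_eq_dirDeriv,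
    Zm12_eq_dirDeriv, Zm21_eq_dirDeriv hz, Zm22_eq_dirDeriv hz, K1_eq_smul_W, K2_eq_smul_W,
    K3_eq_smul_W, dirDeriv]
  module

/-- The coefficients `c` recovered from the data of a kernel field: the inverse of
`c ↦ (modeCoeff c, normalCoeff c)`. -/
def basisCoeff (m : Fin 5 → ℂ) (q : R3) : Fin 13 → ℝ :=
  ![-(m 2).re, 2 * (m 2).im, -(m 1).re, -(m 1).im, 2 * ((m 0).re - (m 4).re),
    2 * ((m 0).im + (m 4).im), (m 3).re, -(m 3).im, -(4 * (m 4).im), 4 * (m 4).re,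
    q 2, 2 * q 0, 2 * q 1]

theorem modeCoeff_basisCoeff (m : Fin 5 → ℂ) (q : R3) : modeCoeff (basisCoeff m q) = m := by
  ext i
  fin_cases i <;> apply Complex.ext <;> simp [modeCoeff, basisCoeff]
  ring

theorem normalCoeff_basisCoeff (m : Fin 5 → ℂ) (q : R3) : normalCoeff (basisCoeff m q) = q := by
  ext i
  fin_cases i <;> simp [normalCoeff, basisCoeff]

theorem basisCoeff_modeCoeff_normalCoeff (c : Fin 13 → ℝ) :
    basisCoeff (modeCoeff c) (normalCoeff c) = c := by
  ext i
  fin_cases i <;> simp [modeCoeff, normalCoeff, basisCoeff] <;> ring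

theorem basisCoeff_zero : basisCoeff 0 0 = 0 := by
  ext i
  fin_cases i <;> simp [basisCoeff]

theorem eq_zero_of_kernelField_eq_zero {m : Fin 5 → ℂ} {q : R3}
    (h : ∀ z ≠ 0, kernelField m q z = 0) : m = 0 ∧ q = 0 := by
  have hcyl (w : ℂ) : dirDeriv ((∑ j, m j * Complex.exp w ^ (j : ℕ)) / Complex.exp w ^ 2)
      cylBubble w + ⟪q, cylBubble w⟫ • cylBubble w = 0 := by
    have hw := Complex.exp_ne_zero w
    rw [← h _ hw, kernelField, dirDeriv_cylBubble, cylBubble]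
    congr 2
    field_simp
  have hnormal (w : ℂ) : ⟪q, cylBubble w⟫ = 0 := by
    simpa [inner_add_right, real_inner_smul_right, inner_cylBubble_dirDeriv, norm_cylBubble]
      using congrArg (⟪cylBubble w, ·⟫) (hcyl w)
  have htangent (w : ℂ) : ∑ j, m j * Complex.exp w ^ (j : ℕ) = 0 := by
    have hzero := congrArg norm (hcyl w)
    rw [hnormal, zero_smul, add_zero, norm_dirDeriv_cylBubble, norm_zero] at hzero
    simpa [(sech₂_pos w.re).ne'] using hzero
  constructor
  · refine Matrix.eq_zero_of_forall_index_sum_mul_pow_eq_zero (f := fun j => (j : ℂ) + 1)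
      (fun i j hij => ?_) fun j => ?_
    · simpa [Fin.ext_iff] using hij
    · simpa only [Complex.exp_log (Nat.cast_add_one_ne_zero (j : ℕ))] using
        htangent (Complex.log (j + 1))
  · have hW {z : ℂ} (hz : z ≠ 0) : ⟪q, W z⟫ = 0 := by
      simpa only [cylBubble, Complex.exp_log hz] using hnormal (Complex.log z)
    have hW_one : W 1 = e3 1 0 0 := by norm_num [W]
    have hW_two : W 2 = e3 (8 / 17) 0 (15 / 17) := by norm_num [W]
    have hW_one_add_I : W (1 + Complex.I) = e3 0 (4 / 5) (3 / 5) := by norm_num [W]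
    have hq₀ : q 0 = 0 := by simpa [hW_one, inner_eq_coords] using hW one_ne_zero
    have hq₂ : q 2 = 0 := by simpa [hW_two, inner_eq_coords, hq₀] using hW two_ne_zero
    have hq₁ : q 1 = 0 := by
      simpa [hW_one_add_I, inner_eq_coords, hq₀, hq₂] using
        hW (z := 1 + Complex.I) (by simp [Complex.ext_iff])
    ext i
    fin_cases i <;> simp [hq₀, hq₁, hq₂]

end Classification

/-- Nondegeneracy of the degree-2 H-bubble: every bounded `C²` solution of the linearized
H-system `L_W[v] = 0` on `ℝ²` is a real linear combination of the thirteen maps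
`Z_{0,1}, …, Z_{−2,2}, K₁, K₂, K₃`, and these thirteen maps are linearly independent over `ℝ`;
hence the space of bounded kernels of `L_W` is 13-dimensional. -/
theorem bounded_kernel_classification :
    (∀ v : ℂ → R3, ContDiff ℝ 2 v → (∃ C : ℝ, ∀ z, ‖v z‖ ≤ C) → (∀ z, LW v z = 0) →
      ∃ c : Fin 13 → ℝ, ∀ z, v z = ∑ i, c i • kernelBasis i z) ∧
    LinearIndependent ℝ kernelBasis := by
  constructor
  · rintro v hv ⟨C, hC⟩ hL
    obtain ⟨m, q, hmq⟩ := exists_eq_kernelField hv hC hL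
    have hcont : Continuous fun z => ∑ i, basisCoeff m q i • kernelBasis i z :=
      continuous_finsetSum _ fun i _ => (continuous_kernelBasis i).fun_const_smul _
    refine ⟨basisCoeff m q,
      congrFun <| hv.continuous.ext_on (dense_compl_singleton 0) hcont fun z hz => ?_⟩
    simp only [hmq z hz, sum_smul_kernelBasis _ hz, modeCoeff_basisCoeff, normalCoeff_basisCoeff]
  · refine Fintype.linearIndependent_iff.mpr fun c hc => ?_
    suffices c = 0 from congrFun this
    have hfield (z : ℂ) (hz : z ≠ 0) : kernelField (modeCoeff c) (normalCoeff c) z = 0 := by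
      simpa only [sum_smul_kernelBasis c hz, Finset.sum_apply, Pi.smul_apply, Pi.zero_apply] using
        congrFun hc z
    obtain ⟨hm, hq⟩ := eq_zero_of_kernelField_eq_zero hfield
    rw [← basisCoeff_modeCoeff_normalCoeff c, hm, hq, basisCoeff_zero]
end
end

section
/- Fix ρ ∈ (0,1) and define W_ρ on the closed unit disk by W_ρ(ξ₁,ξ₂) = 4√(4ρ(ρ(ξ₁²+ξ₂²)+ξ₁)+1) · (1−ξ₁²−ξ₂²)² / ( (ρ²(ξ₁²+ξ₂²)−2ρξ₁+1)² · √(1+2(ξ₁²+ξ₂²)) ). Then (ρ,0) is a critical point of W_ρ (∇W_ρ(ρ,0) = 0) and the Hessian of W_ρ at (ρ,0) is the diagonal matrix with both diagonal entries equal to −24(2ρ²+1)(3ρ⁴+2ρ²+1)/((ρ²−1)⁴(2ρ²+1)^{5/2}) and vanishing mixed second derivative ∂²W_ρ/∂ξ₁∂ξ₂(ρ,0) = 0. In particular (ρ,0) is a non-degenerate local maximum of W_ρ. -/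
noncomputable section

open Metric

/-- Partial derivative in the `x` direction of a scalar function, identifying `ℝ²` with `ℂ`
via `z = x + iy`. -/
def px (f : ℂ → ℝ) (z : ℂ) : ℝ := fderiv ℝ f z 1

/-- Partial derivative in the `y` direction. -/
def py (f : ℂ → ℝ) (z : ℂ) : ℝ := fderiv ℝ f z Complex.I

/-- The function `W_ρ` on the closed unit disk (identifying `ℝ²` with `ℂ`). -/
def Wfun (ρ : ℝ) (ξ : ℂ) : ℝ :=
  4 * Real.sqrt (4 * ρ * (ρ * (ξ.re ^ 2 + ξ.im ^ 2) + ξ.re) + 1) *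
      (1 - ξ.re ^ 2 - ξ.im ^ 2) ^ 2 /
    ((ρ ^ 2 * (ξ.re ^ 2 + ξ.im ^ 2) - 2 * ρ * ξ.re + 1) ^ 2 *
      Real.sqrt (1 + 2 * (ξ.re ^ 2 + ξ.im ^ 2)))

/-!
Identifying `ℝ²` with `ℂ`, the squared norms `‖1 + 2ρz‖²` and `‖1 - ρz‖²` occur in `W_ρ`, and
`W_ρ(z) = W_ρ(ρ) √N₂(z) / N₋₁(z)²`, where `N_c(z) = ‖1 + cρz‖² / ((1 + cρ²)(1 + c‖z‖²))`.
Since `N_c(z) = 1 - c‖z - ρ‖² / ((1 + cρ²)(1 + c‖z‖²))`, each `N_c` has the value `1` and a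
critical point at `ρ`, with Hessian `-2c / (1 + cρ²)²` times the identity; smooth functions of `N₂`
and `N₋₁` inherit an isotropic Hessian by the chain and product rules. The same formula shows
`N₂ ≤ 1 ≤ N₋₁` near `ρ`, so `ρ` is a local maximum.
-/

open scoped ComplexConjugate Topology

section CriticalPoint

variable {𝕜 E : Type*} [NontriviallyNormedField 𝕜] [NormedAddCommGroup E] [NormedSpace 𝕜 E]
  {f g : E → 𝕜} {H K : E →L[𝕜] E →L[𝕜] 𝕜} {a : E}

/-- `f` is twice continuously differentiable at `a` and has there a critical point with Hessian `H`,
the Hessian being encoded as the derivative of the derivative. -/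
structure HasCriticalHessianAt (f : E → 𝕜) (H : E →L[𝕜] E →L[𝕜] 𝕜) (a : E) : Prop where
  contDiffAt : ContDiffAt 𝕜 2 f a
  fderiv_eq_zero : fderiv 𝕜 f a = 0
  fderiv_fderiv_eq : fderiv 𝕜 (fderiv 𝕜 f) a = H

lemma differentiableAt_fderiv_of_contDiffAt_two (hf : ContDiffAt 𝕜 2 f a) :
    DifferentiableAt 𝕜 (fderiv 𝕜 f) a :=
  (hf.fderiv_right (m := 1) (by norm_num)).differentiableAt one_ne_zero

lemma eventually_differentiableAt_of_contDiffAt_two (hf : ContDiffAt 𝕜 2 f a) :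
    ∀ᶠ z in 𝓝 a, DifferentiableAt 𝕜 f z :=
  (hf.eventually (by simp)).mono fun _ hz ↦ hz.differentiableAt two_ne_zero

lemma fderiv_fderiv_mul (hf : ContDiffAt 𝕜 2 f a) (hg : ContDiffAt 𝕜 2 g a) :
    fderiv 𝕜 (fderiv 𝕜 fun z ↦ f z * g z) a =
      f a • fderiv 𝕜 (fderiv 𝕜 g) a + (fderiv 𝕜 f a).smulRight (fderiv 𝕜 g a) +
        (g a • fderiv 𝕜 (fderiv 𝕜 f) a + (fderiv 𝕜 g a).smulRight (fderiv 𝕜 f a)) := by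
  have h_fderiv : fderiv 𝕜 (fun z ↦ f z * g z) =ᶠ[𝓝 a]
      fun z ↦ f z • fderiv 𝕜 g z + g z • fderiv 𝕜 f z := by
    filter_upwards [eventually_differentiableAt_of_contDiffAt_two hf,
      eventually_differentiableAt_of_contDiffAt_two hg] with z hfz hgz
    exact fderiv_fun_mul hfz hgz
  have hf₁ := (hf.differentiableAt two_ne_zero).hasFDerivAt
  have hg₁ := (hg.differentiableAt two_ne_zero).hasFDerivAt
  have hf₂ := (differentiableAt_fderiv_of_contDiffAt_two hf).hasFDerivAt
  have hg₂ := (differentiableAt_fderiv_of_contDiffAt_two hg).hasFDerivAt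
  rw [h_fderiv.fderiv_eq]
  exact ((hf₁.smul hg₂).add (hg₁.smul hf₂)).fderiv

namespace HasCriticalHessianAt

lemma fderiv_fderiv_apply (hf : HasCriticalHessianAt f H a) (v w : E) :
    fderiv 𝕜 (fun z ↦ fderiv 𝕜 f z v) a w = H w v := by
  rw [fderiv_clm_apply (differentiableAt_fderiv_of_contDiffAt_two hf.contDiffAt)
    (differentiableAt_const v), hf.fderiv_fderiv_eq]
  simp

lemma mul (hf : HasCriticalHessianAt f H a) (hg : HasCriticalHessianAt g K a) :
    HasCriticalHessianAt (fun z ↦ f z * g z) (f a • K + g a • H) a where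
  contDiffAt := hf.contDiffAt.mul hg.contDiffAt
  fderiv_eq_zero := by
    rw [fderiv_fun_mul (hf.contDiffAt.differentiableAt two_ne_zero)
      (hg.contDiffAt.differentiableAt two_ne_zero), hf.fderiv_eq_zero, hg.fderiv_eq_zero]
    ext; simp
  fderiv_fderiv_eq := by
    rw [fderiv_fderiv_mul hf.contDiffAt hg.contDiffAt, hf.fderiv_eq_zero, hg.fderiv_eq_zero,
      hf.fderiv_fderiv_eq, hg.fderiv_fderiv_eq]
    ext; simp

lemma mul_of_eq_zero (hf : HasCriticalHessianAt f H a) (hfa : f a = 0)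
    (hg : ContDiffAt 𝕜 2 g a) : HasCriticalHessianAt (fun z ↦ f z * g z) (g a • H) a where
  contDiffAt := hf.contDiffAt.mul hg
  fderiv_eq_zero := by
    rw [fderiv_fun_mul (hf.contDiffAt.differentiableAt two_ne_zero)
      (hg.differentiableAt two_ne_zero), hf.fderiv_eq_zero, hfa]
    ext; simp
  fderiv_fderiv_eq := by
    rw [fderiv_fderiv_mul hf.contDiffAt hg, hf.fderiv_eq_zero, hf.fderiv_fderiv_eq, hfa]
    ext; simp

lemma scalar_comp {φ : 𝕜 → 𝕜} {φ' : 𝕜} (hφ : ContDiffAt 𝕜 2 φ (f a))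
    (hφ' : HasDerivAt φ φ' (f a)) (hf : HasCriticalHessianAt f H a) :
    HasCriticalHessianAt (fun z ↦ φ (f z)) (φ' • H) a := by
  have hf₁ := (hf.contDiffAt.differentiableAt two_ne_zero).hasFDerivAt
  have h_fderiv : fderiv 𝕜 (fun z ↦ φ (f z)) =ᶠ[𝓝 a]
      fun z ↦ deriv φ (f z) • fderiv 𝕜 f z := by
    filter_upwards [eventually_differentiableAt_of_contDiffAt_two hf.contDiffAt,
      hf.contDiffAt.continuousAt.eventually
        (eventually_differentiableAt_of_contDiffAt_two hφ)] with z hfz hφz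
    exact (hφz.hasDerivAt.comp_hasFDerivAt z hfz.hasFDerivAt).fderiv
  have h_deriv : DifferentiableAt 𝕜 (fun z ↦ deriv φ (f z)) a :=
    ((hφ.derivWithin (m := 1) (by norm_num)).differentiableAt one_ne_zero).comp a
      hf₁.differentiableAt
  refine ⟨hφ.comp a hf.contDiffAt, ?_, ?_⟩
  · rw [h_fderiv.eq_of_nhds, hf.fderiv_eq_zero]
    ext; simp
  · rw [h_fderiv.fderiv_eq,
      fderiv_fun_smul h_deriv (differentiableAt_fderiv_of_contDiffAt_two hf.contDiffAt),
      hf.fderiv_eq_zero, hf.fderiv_fderiv_eq, hφ'.deriv]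
    ext; simp

lemma const_mul (c : 𝕜) (hf : HasCriticalHessianAt f H a) :
    HasCriticalHessianAt (fun z ↦ c * f z) (c • H) a :=
  hf.scalar_comp (contDiffAt_const.mul contDiffAt_id) (by simpa using (hasDerivAt_id _).const_mul c)

lemma const_add (c : 𝕜) (hf : HasCriticalHessianAt f H a) :
    HasCriticalHessianAt (fun z ↦ c + f z) H a := by
  simpa using hf.scalar_comp (contDiffAt_const.add contDiffAt_id) ((hasDerivAt_id _).const_add c)

lemma congr_of_eventuallyEq (hg : HasCriticalHessianAt g H a) (h : f =ᶠ[𝓝 a] g) :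
    HasCriticalHessianAt f H a where
  contDiffAt := hg.contDiffAt.congr_of_eventuallyEq h
  fderiv_eq_zero := h.fderiv_eq.trans hg.fderiv_eq_zero
  fderiv_fderiv_eq := h.fderiv.fderiv_eq.trans hg.fderiv_fderiv_eq

end HasCriticalHessianAt

lemma hasCriticalHessianAt_norm_sub_sq {F : Type*} [NormedAddCommGroup F] [InnerProductSpace ℝ F]
    (a : F) : HasCriticalHessianAt (fun z ↦ ‖z - a‖ ^ 2) (2 • innerSL ℝ) a := by
  have h_fderiv : fderiv ℝ (fun z : F ↦ ‖z - a‖ ^ 2) = fun z ↦ (2 • innerSL ℝ) (z - a) := by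
    ext1 z
    exact (fderiv_comp_sub (f := fun z : F ↦ ‖z‖ ^ 2) a).trans (fderiv_norm_sq_apply _)
  refine ⟨(contDiffAt_id.sub contDiffAt_const).norm_sq ℝ, by simp [h_fderiv], ?_⟩
  rw [h_fderiv, fderiv_comp_sub]
  exact (2 • innerSL ℝ : F →L[ℝ] F →L[ℝ] ℝ).fderiv

end CriticalPoint

/-- `cos² (√c d / 2)`, where `d` is the distance of `w` and `z` in the conformal metric
`4 |dz|² / (1 + c |z|²)²` of constant curvature `c` (for `c < 0` it is `cosh² (√(-c) d / 2)`). The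
formula is used for all `w` and `z`, also where it has no metric meaning. -/
def cosSqHalfDist (c : ℝ) (w z : ℂ) : ℝ :=
  ‖1 + c * (conj w * z)‖ ^ 2 / ((1 + c * ‖w‖ ^ 2) * (1 + c * ‖z‖ ^ 2))

section CosSqHalfDist

variable {c : ℝ} {w z : ℂ}

lemma norm_one_add_mul_conj_mul_sq (c : ℝ) (w z : ℂ) :
    ‖1 + c * (conj w * z)‖ ^ 2 =
      (1 + c * ‖w‖ ^ 2) * (1 + c * ‖z‖ ^ 2) - c * ‖z - w‖ ^ 2 := by
  simp only [Complex.sq_norm, Complex.normSq_apply, Complex.add_re, Complex.add_im,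
    Complex.sub_re, Complex.sub_im, Complex.mul_re, Complex.mul_im, Complex.one_re,
    Complex.one_im, Complex.conj_re, Complex.conj_im, Complex.ofReal_re, Complex.ofReal_im]
  ring

lemma cosSqHalfDist_eq (hw : 1 + c * ‖w‖ ^ 2 ≠ 0) (hz : 1 + c * ‖z‖ ^ 2 ≠ 0) :
    cosSqHalfDist c w z =
      1 + -c * (‖z - w‖ ^ 2 * ((1 + c * ‖w‖ ^ 2) * (1 + c * ‖z‖ ^ 2))⁻¹) := by
  rw [cosSqHalfDist, norm_one_add_mul_conj_mul_sq, sub_div, div_self (mul_ne_zero hw hz)]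
  ring

lemma cosSqHalfDist_self (hw : 1 + c * ‖w‖ ^ 2 ≠ 0) : cosSqHalfDist c w w = 1 := by
  simp [cosSqHalfDist_eq hw hw]

lemma cosSqHalfDist_le_one (hc : 0 ≤ c) (w z : ℂ) : cosSqHalfDist c w z ≤ 1 := by
  rw [cosSqHalfDist_eq (by positivity) (by positivity), neg_mul, add_neg_le_iff_le_add,
    le_add_iff_nonneg_right]
  positivity

lemma one_le_cosSqHalfDist (hc : c ≤ 0) (hwz : 0 < (1 + c * ‖w‖ ^ 2) * (1 + c * ‖z‖ ^ 2)) :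
    1 ≤ cosSqHalfDist c w z := by
  rw [cosSqHalfDist_eq (left_ne_zero_of_mul hwz.ne') (right_ne_zero_of_mul hwz.ne'),
    le_add_iff_nonneg_right]
  have := neg_nonneg.2 hc
  positivity

lemma hasCriticalHessianAt_cosSqHalfDist (hw : 1 + c * ‖w‖ ^ 2 ≠ 0) :
    HasCriticalHessianAt (cosSqHalfDist c w)
      ((-2 * c / (1 + c * ‖w‖ ^ 2) ^ 2) • innerSL ℝ) w := by
  have h_inv : ContDiffAt ℝ 2 (fun z : ℂ ↦ ((1 + c * ‖w‖ ^ 2) * (1 + c * ‖z‖ ^ 2))⁻¹) w :=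
    (contDiffAt_const.mul (contDiffAt_const.add
      (contDiffAt_const.mul (contDiffAt_id.norm_sq ℝ)))).inv (mul_ne_zero hw hw)
  have h_near : ∀ᶠ z : ℂ in 𝓝 w, 1 + c * ‖z‖ ^ 2 ≠ 0 :=
    ContinuousAt.eventually_ne (by fun_prop) hw
  convert (((hasCriticalHessianAt_norm_sub_sq w).mul_of_eq_zero (by simp) h_inv).const_mul
    (-c)).const_add 1 |>.congr_of_eventuallyEq (h_near.mono fun z ↦ cosSqHalfDist_eq hw) using 1
  rw [← Nat.cast_smul_eq_nsmul ℝ, smul_smul, smul_smul]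
  congr 1
  field_simp
  ring

end CosSqHalfDist

section Wfun

variable {ρ : ℝ}

lemma Wfun_eq_norm (ρ : ℝ) (z : ℂ) :
    Wfun ρ z = 4 * √(‖1 + (2 : ℝ) * (conj (ρ : ℂ) * z)‖ ^ 2) * (1 - ‖z‖ ^ 2) ^ 2 /
      ((‖1 + (-1 : ℝ) * (conj (ρ : ℂ) * z)‖ ^ 2) ^ 2 * √(1 + 2 * ‖z‖ ^ 2)) := by
  have h_norm_sq (c : ℝ) : ‖1 + c * (conj (ρ : ℂ) * z)‖ ^ 2 =
      c ^ 2 * ρ ^ 2 * (z.re ^ 2 + z.im ^ 2) + 2 * c * ρ * z.re + 1 := by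
    rw [norm_one_add_mul_conj_mul_sq]
    simp only [Complex.sq_norm, Complex.normSq_apply, Complex.sub_re, Complex.sub_im,
      Complex.ofReal_re, Complex.ofReal_im]
    ring
  rw [h_norm_sq, h_norm_sq, Complex.sq_norm, Complex.normSq_apply, Wfun]
  ring_nf

lemma Wfun_self (hρ : ρ ^ 2 ≠ 1) :
    Wfun ρ ρ = 4 * √(1 + 2 * ρ ^ 2) / (1 - ρ ^ 2) ^ 2 := by
  have hp : 1 - ρ ^ 2 ≠ 0 := sub_ne_zero.2 hρ.symm
  have h_num : 4 * ρ * (ρ * ρ ^ 2 + ρ) + 1 = (1 + 2 * ρ ^ 2) ^ 2 := by ring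
  have h_den : ρ ^ 2 * ρ ^ 2 - 2 * ρ * ρ + 1 = (1 - ρ ^ 2) ^ 2 := by ring
  rw [Wfun, Complex.ofReal_re, Complex.ofReal_im, zero_pow two_ne_zero, add_zero, sub_zero,
    h_num, h_den, Real.sqrt_sq (by positivity)]
  field_simp
  rw [Real.sq_sqrt (by positivity)]

lemma Wfun_eq_self_mul (hρ : ρ ^ 2 ≠ 1) (z : ℂ) :
    Wfun ρ z =
      Wfun ρ ρ * (√(cosSqHalfDist 2 ρ z) * (cosSqHalfDist (-1) ρ z ^ 2)⁻¹) := by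
  have hp : 1 - ρ ^ 2 ≠ 0 := sub_ne_zero.2 hρ.symm
  have h_norm : ‖(ρ : ℂ)‖ ^ 2 = ρ ^ 2 := by simp
  rw [Wfun_self hρ, Wfun_eq_norm, cosSqHalfDist, cosSqHalfDist, h_norm,
    Real.sqrt_div (sq_nonneg _), Real.sqrt_mul (by positivity), div_pow, inv_div]
  simp only [neg_one_mul, ← sub_eq_add_neg]
  field_simp

lemma hasCriticalHessianAt_Wfun (hρ : ρ ^ 2 ≠ 1) :
    HasCriticalHessianAt (Wfun ρ)
      ((-Wfun ρ ρ * (2 / (1 + 2 * ρ ^ 2) ^ 2 + 4 / (1 - ρ ^ 2) ^ 2)) • innerSL ℝ) ρ := by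
  have h_norm : ‖(ρ : ℂ)‖ ^ 2 = ρ ^ 2 := by simp
  have h₂ : 1 + 2 * ‖(ρ : ℂ)‖ ^ 2 ≠ 0 := by positivity
  have h₁ : 1 + -1 * ‖(ρ : ℂ)‖ ^ 2 ≠ 0 := by
    rw [h_norm, neg_one_mul, ← sub_eq_add_neg]
    exact sub_ne_zero.2 hρ.symm
  have h_sqrt : HasDerivAt (fun x ↦ √x) (1 / 2) 1 := by
    simpa using Real.hasDerivAt_sqrt one_ne_zero
  have h_inv_sq : HasDerivAt (fun x : ℝ ↦ (x ^ 2)⁻¹) (-2) 1 := by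
    simpa using (hasDerivAt_pow 2 (1 : ℝ)).fun_inv (by norm_num)
  have h_spherical := (hasCriticalHessianAt_cosSqHalfDist h₂).scalar_comp
    (φ := fun x ↦ √x) (φ' := 1 / 2)
    (by rw [cosSqHalfDist_self h₂]; exact Real.contDiffAt_sqrt one_ne_zero)
    (by rwa [cosSqHalfDist_self h₂])
  have h_hyperbolic := (hasCriticalHessianAt_cosSqHalfDist h₁).scalar_comp
    (φ := fun x ↦ (x ^ 2)⁻¹) (φ' := -2)
    (by rw [cosSqHalfDist_self h₁]; exact (contDiffAt_id.pow 2).inv (by norm_num))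
    (by rwa [cosSqHalfDist_self h₁])
  rw [funext (Wfun_eq_self_mul hρ)]
  convert (h_spherical.mul h_hyperbolic).const_mul (Wfun ρ ρ) using 1
  simp only [cosSqHalfDist_self h₁, cosSqHalfDist_self h₂, h_norm, Real.sqrt_one]
  module

lemma Wfun_hessian_coeff_eq (hρ : ρ ^ 2 ≠ 1) :
    -Wfun ρ ρ * (2 / (1 + 2 * ρ ^ 2) ^ 2 + 4 / (1 - ρ ^ 2) ^ 2) =
      -(24 * (2 * ρ ^ 2 + 1) * (3 * ρ ^ 4 + 2 * ρ ^ 2 + 1)) /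
        ((ρ ^ 2 - 1) ^ 4 * (2 * ρ ^ 2 + 1) ^ ((5 : ℝ) / 2)) := by
  have hp : 1 - ρ ^ 2 ≠ 0 := sub_ne_zero.2 hρ.symm
  have h_even : (ρ ^ 2 - 1) ^ 4 = (1 - ρ ^ 2) ^ 4 := by ring
  have h_rpow : (1 + 2 * ρ ^ 2) ^ ((5 : ℝ) / 2) = (1 + 2 * ρ ^ 2) ^ 2 * √(1 + 2 * ρ ^ 2) := by
    rw [Real.sqrt_eq_rpow, ← Real.rpow_natCast (1 + 2 * ρ ^ 2) 2,
      ← Real.rpow_add (by positivity)]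
    norm_num
  rw [add_comm (2 * ρ ^ 2) 1, h_even, h_rpow, Wfun_self hρ]
  field_simp
  rw [Real.sq_sqrt (by positivity)]
  ring

lemma Wfun_le_self (hρ : ρ ^ 2 ≠ 1) {z : ℂ} (hz : 0 < (1 - ρ ^ 2) * (1 - ‖z‖ ^ 2)) :
    Wfun ρ z ≤ Wfun ρ ρ := by
  have h_spherical : √(cosSqHalfDist 2 ρ z) ≤ 1 :=
    Real.sqrt_le_one.2 (cosSqHalfDist_le_one zero_le_two _ _)
  have h_hyperbolic : (cosSqHalfDist (-1) ρ z ^ 2)⁻¹ ≤ 1 :=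
    inv_le_one_of_one_le₀ (one_le_pow₀ (one_le_cosSqHalfDist (by norm_num)
      (by simpa [← sub_eq_add_neg] using hz)))
  have h_nonneg : 0 ≤ Wfun ρ ρ := by rw [Wfun_self hρ]; positivity
  rw [Wfun_eq_self_mul hρ z]
  exact mul_le_of_le_one_right h_nonneg (mul_le_one₀ h_spherical (by positivity) h_hyperbolic)

lemma isLocalMax_Wfun (hρ : ρ ^ 2 ≠ 1) : IsLocalMax (Wfun ρ) (ρ : ℂ) := by
  have h_cont : ContinuousAt (fun z : ℂ ↦ (1 - ρ ^ 2) * (1 - ‖z‖ ^ 2)) ρ := by fun_prop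
  have h_pos : 0 < (1 - ρ ^ 2) * (1 - ‖(ρ : ℂ)‖ ^ 2) := by
    simpa using mul_self_pos.2 (sub_ne_zero.2 hρ.symm)
  exact (h_cont.eventually (lt_mem_nhds h_pos)).mono fun _ ↦ Wfun_le_self hρ

end Wfun

theorem W_rho_critical_point_general (ρ : ℝ) (hρ : ρ ^ 2 ≠ 1) :
    px (Wfun ρ) (ρ : ℂ) = 0 ∧
    py (Wfun ρ) (ρ : ℂ) = 0 ∧
    px (px (Wfun ρ)) (ρ : ℂ) =
      -(24 * (2 * ρ ^ 2 + 1) * (3 * ρ ^ 4 + 2 * ρ ^ 2 + 1)) /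
        ((ρ ^ 2 - 1) ^ 4 * (2 * ρ ^ 2 + 1) ^ ((5 : ℝ) / 2)) ∧
    py (py (Wfun ρ)) (ρ : ℂ) =
      -(24 * (2 * ρ ^ 2 + 1) * (3 * ρ ^ 4 + 2 * ρ ^ 2 + 1)) /
        ((ρ ^ 2 - 1) ^ 4 * (2 * ρ ^ 2 + 1) ^ ((5 : ℝ) / 2)) ∧
    px (py (Wfun ρ)) (ρ : ℂ) = 0 ∧
    IsLocalMax (Wfun ρ) (ρ : ℂ) := by
  have hW := hasCriticalHessianAt_Wfun hρ
  rw [Wfun_hessian_coeff_eq hρ] at hW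
  refine ⟨?_, ?_, ?_, ?_, ?_, isLocalMax_Wfun hρ⟩
  · simp [px, hW.fderiv_eq_zero]
  · simp [py, hW.fderiv_eq_zero]
  · exact (hW.fderiv_fderiv_apply 1 1).trans (by simp [innerSL_apply_apply ℝ])
  · exact (hW.fderiv_fderiv_apply Complex.I Complex.I).trans (by simp [innerSL_apply_apply ℝ])
  · exact (hW.fderiv_fderiv_apply Complex.I 1).trans (by simp [innerSL_apply_apply ℝ])

/-- `(ρ, 0)` is a critical point of `W_ρ`, the Hessian there is diagonal with both diagonal
entries equal to `−24(2ρ²+1)(3ρ⁴+2ρ²+1)/((ρ²−1)⁴(2ρ²+1)^{5/2})` and vanishing mixed second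
derivative; in particular `(ρ, 0)` is a non-degenerate local maximum of `W_ρ`. -/
theorem W_rho_critical_point (ρ : ℝ) (hρ : ρ ∈ Set.Ioo (0 : ℝ) 1) :
    px (Wfun ρ) (ρ : ℂ) = 0 ∧
    py (Wfun ρ) (ρ : ℂ) = 0 ∧
    px (px (Wfun ρ)) (ρ : ℂ) =
      -(24 * (2 * ρ ^ 2 + 1) * (3 * ρ ^ 4 + 2 * ρ ^ 2 + 1)) /
        ((ρ ^ 2 - 1) ^ 4 * (2 * ρ ^ 2 + 1) ^ ((5 : ℝ) / 2)) ∧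
    py (py (Wfun ρ)) (ρ : ℂ) =
      -(24 * (2 * ρ ^ 2 + 1) * (3 * ρ ^ 4 + 2 * ρ ^ 2 + 1)) /
        ((ρ ^ 2 - 1) ^ 4 * (2 * ρ ^ 2 + 1) ^ ((5 : ℝ) / 2)) ∧
    px (py (Wfun ρ)) (ρ : ℂ) = 0 ∧
    IsLocalMax (Wfun ρ) (ρ : ℂ) :=
  W_rho_critical_point_general ρ (by nlinarith [hρ.1, hρ.2])
end
end
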